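/- arXiv:2408.02174 — 3 statements merged into one kernel-verified Lean document; each statement's English description precedes it below -/
import Mathlib

section
/- For every x ∈ ℝᵐ, the set Nash(x) of lower-level Nash equilibria at x is nonempty; that is, there exists a profile y* ∈ ℝᴵ such that for every follower i, y*ᵢ ∈ Sᵢ(x) and φᵢ(x, y*) ≤ φᵢ(x, y) for every profile y that agrees with y* in all coordinates except possibly the i-th and whose i-th coordinate lies in Sᵢ(x). (This is the Kakutani fixed-point step in the proof of the paper's Theorem 2.) -/
namespace Kuhn

/-- `rot k`: `0 ↦ k`, `t ↦ t-1` for `1 ≤ t ≤ k`, identity above `k`. -/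
def rot (k : ℕ) : Equiv.Perm ℕ where
  toFun t := if t = 0 then k else if t ≤ k then t - 1 else t
  invFun t := if t = k then 0 else if t < k then t + 1 else t
  left_inv t := by grind
  right_inv t := by grind

theorem rot_apply (k t : ℕ) : rot k t = if t = 0 then k else if t ≤ k then t - 1 else t := rfl
theorem rot_symm_apply (k t : ℕ) :
    (rot k).symm t = if t = k then 0 else if t < k then t + 1 else t := rfl

/-- vertices of the simplex `(q, τ)`. -/
def vtx (q : ℕ → ℕ) (τ : Equiv.Perm ℕ) (j : ℕ) : ℕ → ℕ :=
  fun c => q c + if τ c < j then 1 else 0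

/-- simplices of dimension `k` in the face where coordinates `≥ k` are `p`. -/
def Simp (p k : ℕ) : Set ((ℕ → ℕ) × Equiv.Perm ℕ) :=
  {s | (∀ c, c < k → s.1 c < p) ∧ (∀ c, k ≤ c → s.1 c = p) ∧ ∀ c, k ≤ c → s.2 c = c}

theorem perm_lt {k : ℕ} {τ : Equiv.Perm ℕ} (h : ∀ c, k ≤ c → τ c = c) {c : ℕ} (hc : c < k) :
    τ c < k := by
  by_contra hh
  have := τ.injective (h _ (not_lt.1 hh))
  omega

theorem finite_fun (M k : ℕ) (d : ℕ → ℕ) :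
    {g : ℕ → ℕ | (∀ c, c < k → g c < M) ∧ ∀ c, k ≤ c → g c = d c}.Finite := by
  have : Set.InjOn (fun (g : ℕ → ℕ) (c : Fin k) => g c)
      {g : ℕ → ℕ | (∀ c, c < k → g c < M) ∧ ∀ c, k ≤ c → g c = d c} := by
    intro g hg g' hg' h
    funext c
    by_cases hc : c < k
    · exact congrFun h ⟨c, hc⟩
    · rw [hg.2 c (by omega), hg'.2 c (by omega)]
  refine Set.Finite.of_finite_image (Set.Finite.subset (Set.Finite.pi' (ι := Fin k)
    (t := fun _ => Set.Iio M) (fun _ => Set.finite_Iio M)) ?_) this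
  rintro _ ⟨g, hg, rfl⟩ c
  exact hg.1 c c.2

theorem simp_finite (p k : ℕ) : (Simp p k).Finite := by
  have h1 := finite_fun p k (fun _ => p)
  have h2 := finite_fun k k (fun c => c)
  refine Set.Finite.of_finite_image (f := fun s : (ℕ → ℕ) × Equiv.Perm ℕ => (s.1, (s.2 : ℕ → ℕ)))
    ((h1.prod h2).subset ?_) ?_
  · rintro _ ⟨s, hs, rfl⟩
    exact ⟨⟨hs.1, hs.2.1⟩, ⟨fun c hc => perm_lt hs.2.2 hc, hs.2.2⟩⟩
  · rintro ⟨q, τ⟩ _ ⟨q', τ'⟩ _ h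
    simp only [Prod.mk.injEq, DFunLike.coe_fn_eq] at h ⊢
    exact h

def Door (k : ℕ) (g : ℕ → ℕ) (i : ℕ) : Prop := ∀ m ≤ k, ∃ j ≤ k + 1, j ≠ i ∧ g j = m
def Rainbow (k : ℕ) (g : ℕ → ℕ) : Prop := ∀ m ≤ k, ∃ j ≤ k, g j = m

theorem door_inj {k : ℕ} {g : ℕ → ℕ} {i : ℕ} (hi : i ≤ k + 1) (h : Door k g i) :
    ∀ a ≤ k + 1, ∀ b ≤ k + 1, a ≠ i → b ≠ i → g a = g b → a = b := by
  classical
  have hcard : ((Finset.range (k + 2)).erase i).card ≤ (Finset.range (k + 1)).card := by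
    rw [Finset.card_erase_of_mem (by simp; omega)]; simp
  have hs : Set.SurjOn g ((Finset.range (k + 2)).erase i) (Finset.range (k + 1)) := by
    intro m hm
    obtain ⟨j, hj, hji, rfl⟩ := h m (by simpa [Nat.lt_succ_iff] using hm)
    exact ⟨j, by simp; omega, rfl⟩
  have hm : Set.MapsTo g ((Finset.range (k + 2)).erase i) (Finset.range (k + 1)) := by
    have himg : Finset.range (k + 1) = ((Finset.range (k + 2)).erase i).image g := by
      apply Finset.eq_of_subset_of_card_le
      · intro m hm
        obtain ⟨j, hj, e⟩ := hs hm
        exact Finset.mem_image.2 ⟨j, hj, e⟩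
      · exact Finset.card_image_le.trans hcard
    intro j hj
    rw [himg]
    exact Finset.mem_coe.2 (Finset.mem_image_of_mem g hj)
  have := Finset.injOn_of_surjOn_of_card_le g hm hs hcard
  intro a ha b hb hai hbi hab
  exact this (by simp; omega) (by simp; omega) hab

open Classical in
theorem door_parity (k : ℕ) (g : ℕ → ℕ) (hg : ∀ j ≤ k + 1, g j ≤ k + 1) :
    (∑ i ∈ Finset.range (k + 2), if Door k g i then (1 : ZMod 2) else 0) =
      if Rainbow (k + 1) g then 1 else 0 := by
  by_cases hr : Rainbow (k + 1) g
  · rw [if_pos hr]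
    obtain ⟨i, hi, hgi⟩ := hr (k + 1) le_rfl
    have hd : Door k g i := by
      intro m hm
      obtain ⟨j, hj, e⟩ := hr m (by omega)
      exact ⟨j, hj, by rintro rfl; omega, e⟩
    rw [Finset.sum_eq_single i]
    · rw [if_pos hd]
    · intro b hb hbi
      rw [if_neg]
      intro hdb
      have hb' : b ≤ k + 1 := by simp at hb; omega
      have hgb : g b ≤ k := by
        have h1 := hg b hb'
        by_contra hcon
        have h2 := door_inj hi hd
        obtain ⟨j1, hj1, hj1b, e1⟩ := hd 0 (by omega)
        -- b contributes nothing; so k values from k slots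
        have hinj := Finset.injOn_of_surjOn_of_card_le (s := Finset.range (k + 2))
          (t := Finset.range (k + 2)) g
          (fun j hj => by
            have := hg j (by simp at hj; omega)
            simp; omega)
          (fun m hm => by
            obtain ⟨j, hj, e⟩ := hr m (by simp at hm; omega)
            exact ⟨j, by simp; omega, e⟩) le_rfl
        exact hbi (hinj (by simp; omega) (by simp; omega) (by omega))
      obtain ⟨j, hj, hjb, e⟩ := hdb (g b) hgb
      have hji : j ≠ i := by rintro rfl; omega
      exact hjb (door_inj hi hd j hj b hb' hji hbi e)
    · intro h; simp at h; omega
  · rw [if_neg hr]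
    by_cases hex : ∃ i ≤ k + 1, Door k g i
    · obtain ⟨i, hi, hd⟩ := hex
      have hgi : g i ≤ k := by
        by_contra hcon
        apply hr
        intro m hm
        by_cases hmk : m ≤ k
        · obtain ⟨j, hj, _, e⟩ := hd m hmk
          exact ⟨j, hj, e⟩
        · exact ⟨i, hi, by have := hg i hi; omega⟩
      obtain ⟨j, hj, hji, e⟩ := hd _ hgi
      have hdj : Door k g j := by
        intro m hm
        obtain ⟨j', hj', h1, h2⟩ := hd m hm
        by_cases hjj : j' = j
        · exact ⟨i, hi, fun h => hji h.symm, by rw [← h2, hjj, e]⟩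
        · exact ⟨j', hj', hjj, h2⟩
      rw [← Finset.sum_subset (s₁ := {i, j})]
      · rw [Finset.sum_pair (fun h => hji h.symm), if_pos hd, if_pos hdj]; decide
      · intro x hx; simp at hx ⊢; omega
      · intro x hx hxn
        rw [if_neg]
        intro hdx
        simp at hx hxn
        have hinj := door_inj hi hd
        have hinj2 := door_inj hj hdj
        have hgx : g x ≤ k := by
          by_contra hcon
          -- remaining k slots cover k+1 values
          have hx' := door_inj (show x ≤ k + 1 by omega) hdx i hi j hj (fun h => hxn.1 h.symm)
            (fun h => hxn.2 h.symm) e.symm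
          exact hji hx'.symm
        exact hji (door_inj (show x ≤ k + 1 by omega) hdx i hi j hj (fun h => hxn.1 h.symm)
            (fun h => hxn.2 h.symm) e.symm).symm
    · apply Finset.sum_eq_zero
      intro i hi
      rw [if_neg]
      intro h
      exact hex ⟨i, by simp at hi; omega, h⟩

/-- moving past the facet opposite to vertex `0`. -/
def fwd (k : ℕ) (s : (ℕ → ℕ) × Equiv.Perm ℕ) : (ℕ → ℕ) × Equiv.Perm ℕ :=
  (fun c => s.1 c + if s.2 c = 0 then 1 else 0, s.2.trans (rot k))
def bwd (k : ℕ) (s : (ℕ → ℕ) × Equiv.Perm ℕ) : (ℕ → ℕ) × Equiv.Perm ℕ :=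
  (fun c => s.1 c - if s.2 c = k then 1 else 0, s.2.trans (rot k).symm)
def mid (i : ℕ) (s : (ℕ → ℕ) × Equiv.Perm ℕ) : (ℕ → ℕ) × Equiv.Perm ℕ :=
  (s.1, s.2.trans (Equiv.swap (i - 1) i))

theorem bwd_fwd (k : ℕ) (s) : bwd k (fwd k s) = s := by
  refine Prod.ext ?_ ?_
  · funext c
    simp only [bwd, fwd, Equiv.trans_apply, rot_apply]
    grind
  · ext c; simp [bwd, fwd]

theorem fwd_bwd (k : ℕ) (s : (ℕ → ℕ) × Equiv.Perm ℕ) (h : ∀ c, s.2 c = k → s.1 c ≠ 0) :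
    fwd k (bwd k s) = s := by
  refine Prod.ext ?_ ?_
  · funext c
    have := h c
    simp only [bwd, fwd, Equiv.trans_apply, rot_symm_apply]
    grind
  · ext c; simp [bwd, fwd]

theorem mid_mid (i : ℕ) (s) : mid i (mid i s) = s := by
  refine Prod.ext rfl ?_
  ext c; simp [mid]

theorem vtx_fwd (k : ℕ) (s : (ℕ → ℕ) × Equiv.Perm ℕ) (j : ℕ) (hj : j ≤ k) :
    vtx (fwd k s).1 (fwd k s).2 j = vtx s.1 s.2 (j + 1) := by
  funext c
  simp only [vtx, fwd, Equiv.trans_apply, rot_apply]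
  grind

theorem vtx_mid (i : ℕ) (s : (ℕ → ℕ) × Equiv.Perm ℕ) (j : ℕ) (hj : j ≠ i) :
    vtx (mid i s).1 (mid i s).2 j = vtx s.1 s.2 j := by
  funext c
  simp only [vtx, mid, Equiv.trans_apply, Equiv.swap_apply_def]
  grind


noncomputable def lab (L : ℕ → (ℕ → ℕ) → Prop) (x : ℕ → ℕ) : ℕ := sInf {c | L c x}

/-- label of the `j`-th vertex. -/
noncomputable def glab (L : ℕ → (ℕ → ℕ) → Prop) (s : (ℕ → ℕ) × Equiv.Perm ℕ) (j : ℕ) : ℕ :=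
  lab L (vtx s.1 s.2 j)

theorem door_zero (k : ℕ) (g : ℕ → ℕ) : Door k g 0 ↔ Rainbow k (fun j => g (j + 1)) := by
  constructor
  · intro h m hm
    obtain ⟨j, hj, h0, e⟩ := h m hm
    exact ⟨j - 1, by omega, by simp only; rw [Nat.sub_add_cancel (by omega), e]⟩
  · intro h m hm
    obtain ⟨j, hj, e⟩ := h m hm
    exact ⟨j + 1, by omega, by omega, e⟩

theorem door_last (k : ℕ) (g : ℕ → ℕ) : Door k g (k + 1) ↔ Rainbow k g := by
  constructor
  · intro h m hm
    obtain ⟨j, hj, h0, e⟩ := h m hm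
    exact ⟨j, by omega, e⟩
  · intro h m hm
    obtain ⟨j, hj, e⟩ := h m hm
    exact ⟨j, by omega, by omega, e⟩

theorem rainbow_congr {k : ℕ} {g g' : ℕ → ℕ} (h : ∀ j ≤ k, g j = g' j) :
    Rainbow k g ↔ Rainbow k g' := by
  constructor <;> intro H m hm <;> obtain ⟨j, hj, e⟩ := H m hm
  · exact ⟨j, hj, by rw [← h j hj, e]⟩
  · exact ⟨j, hj, by rw [h j hj, e]⟩

theorem door_congr {k i : ℕ} {g g' : ℕ → ℕ} (h : ∀ j, j ≠ i → g j = g' j) :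
    Door k g i ↔ Door k g' i := by
  constructor <;> intro H m hm <;> obtain ⟨j, hj, hi, e⟩ := H m hm
  · exact ⟨j, hj, hi, by rw [← h j hi, e]⟩
  · exact ⟨j, hj, hi, by rw [h j hi, e]⟩

section
variable {L : ℕ → (ℕ → ℕ) → Prop} {p k : ℕ} {s : (ℕ → ℕ) × Equiv.Perm ℕ}

theorem door_fwd : Door k (glab L s) 0 ↔ Rainbow k (glab L (fwd k s)) := by
  rw [door_zero]
  apply rainbow_congr
  intro j hj
  simp only [glab]
  rw [vtx_fwd k s j hj]

theorem door_mid {i : ℕ} : Door k (glab L s) i ↔ Door k (glab L (mid i s)) i := by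
  apply door_congr
  intro j hj
  simp only [glab]
  rw [vtx_mid i s j hj]

theorem fwd_mem (hs : s ∈ Simp p (k + 1)) (h : ∀ c, s.2 c = 0 → s.1 c + 1 < p) :
    fwd k s ∈ Simp p (k + 1) := by
  obtain ⟨h1, h2, h3⟩ := hs
  refine ⟨fun c hc => ?_, fun c hc => ?_, fun c hc => ?_⟩
  · have := h1 c hc
    have := h c
    simp only [fwd]; grind
  · have := h2 c hc
    have := h3 c hc
    simp only [fwd]; grind
  · have := h3 c hc
    simp only [fwd, Equiv.trans_apply, rot_apply]; grind

theorem bwd_mem (hs : s ∈ Simp p (k + 1)) : bwd k s ∈ Simp p (k + 1) := by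
  obtain ⟨h1, h2, h3⟩ := hs
  refine ⟨fun c hc => ?_, fun c hc => ?_, fun c hc => ?_⟩
  · have := h1 c hc
    simp only [bwd]; grind
  · have := h2 c hc
    have := h3 c hc
    simp only [bwd]; grind
  · have := h3 c hc
    simp only [bwd, Equiv.trans_apply, rot_symm_apply]; grind

theorem mid_mem {i : ℕ} (hi : i < k + 1) (hs : s ∈ Simp p (k + 1)) : mid i s ∈ Simp p (k + 1) := by
  obtain ⟨h1, h2, h3⟩ := hs
  refine ⟨h1, h2, fun c hc => ?_⟩
  have := h3 c hc
  simp only [mid, Equiv.trans_apply, Equiv.swap_apply_def]; grind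

theorem fwd_mem' (hs : s ∈ Simp p (k + 1)) (h0 : s.2 k = 0) (hp : s.1 k + 1 = p) :
    fwd k s ∈ Simp p k := by
  obtain ⟨h1, h2, h3⟩ := hs
  have hu : ∀ c, s.2 c = 0 → c = k := fun c hc => s.2.injective (hc.trans h0.symm)
  refine ⟨fun c hc => ?_, fun c hc => ?_, fun c hc => ?_⟩
  · have := h1 c (by omega)
    have := hu c
    simp only [fwd]; grind
  · rcases hc.eq_or_lt with rfl | hc
    · simp only [fwd]; grind
    have := h2 c hc
    have := h3 c hc
    simp only [fwd]; grind
  · rcases hc.eq_or_lt with rfl | hc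
    · simp only [fwd, Equiv.trans_apply, rot_apply]; grind
    have := h3 c hc
    simp only [fwd, Equiv.trans_apply, rot_apply]; grind

theorem bwd_mem' (hp : 0 < p) (hs : s ∈ Simp p k) : bwd k s ∈ Simp p (k + 1) := by
  obtain ⟨h1, h2, h3⟩ := hs
  have hk := h3 k le_rfl
  have hu : ∀ c, s.2 c = k → c = k := fun c hc => s.2.injective (hc.trans hk.symm)
  refine ⟨fun c hc => ?_, fun c hc => ?_, fun c hc => ?_⟩
  · have := h1 c
    have := h2 c
    have := hu c
    simp only [bwd]; grind
  · have := h2 c (by omega)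
    have := h3 c (by omega)
    simp only [bwd]; grind
  · have := h3 c (by omega)
    simp only [bwd, Equiv.trans_apply, rot_symm_apply]; grind

theorem exit_zero (hL1 : ∀ c x, x c = p → L c x)
    (hs : s ∈ Simp p (k + 1)) (hd : Door k (glab L s) 0) (hB : ¬ (s.2 k = 0 ∧ s.1 k + 1 = p)) :
    ∀ c, s.2 c = 0 → s.1 c + 1 < p := by
  intro c hc
  have hck : c < k + 1 := by
    by_contra h
    have := hs.2.2 c (by omega)
    omega
  have h1 := hs.1 c hck
  by_contra hcon
  have hcp : s.1 c + 1 = p := by omega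
  obtain ⟨j, hj, hj0, e⟩ := hd k le_rfl
  have : glab L s j ≤ c := Nat.sInf_le (hL1 c _ (by simp only [vtx]; grind))
  have : c = k := by omega
  subst this
  exact hB ⟨hc, hcp⟩

theorem exit_last (hL0 : ∀ c x, x c = 0 → ¬ L c x) (hL1 : ∀ c x, x c = p → L c x)
    (hs : s ∈ Simp p (k + 1)) (hd : Door k (glab L s) (k + 1)) :
    ∀ c, s.2 c = k → s.1 c ≠ 0 := by
  intro c hc h0
  have hck : c < k + 1 := by
    by_contra h
    have := hs.2.2 c (by omega)
    omega
  obtain ⟨j, hj, hj0, e⟩ := hd c (by omega)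
  have hne : {c | L c (vtx s.1 s.2 j)}.Nonempty := by
    refine ⟨k + 1, hL1 _ _ ?_⟩
    have := hs.2.1 (k + 1) le_rfl
    have := hs.2.2 (k + 1) le_rfl
    simp only [vtx]; grind
  have hm := Nat.sInf_mem hne
  have e' : sInf {c | L c (vtx s.1 s.2 j)} = c := e
  rw [e'] at hm
  exact hL0 c _ (by simp only [vtx]; grind) hm

theorem glab_le (hL1 : ∀ c x, x c = p → L c x) (hs : s ∈ Simp p k) (j : ℕ) (hj : j ≤ k) :
    glab L s j ≤ k := by
  refine Nat.sInf_le (hL1 k _ ?_)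
  have := hs.2.1 k le_rfl
  have := hs.2.2 k le_rfl
  simp only [vtx]; grind

def inv (k : ℕ) (t : ((ℕ → ℕ) × Equiv.Perm ℕ) × ℕ) : ((ℕ → ℕ) × Equiv.Perm ℕ) × ℕ :=
  if t.2 = 0 then (fwd k t.1, k + 1) else if t.2 = k + 1 then (bwd k t.1, 0) else (mid t.2 t.1, t.2)

def Good (L : ℕ → (ℕ → ℕ) → Prop) (p k : ℕ) (t : ((ℕ → ℕ) × Equiv.Perm ℕ) × ℕ) : Prop :=
  t.1 ∈ Simp p (k + 1) ∧ t.2 < k + 2 ∧ Door k (glab L t.1) t.2 ∧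
    ¬ (t.2 = 0 ∧ t.1.2 k = 0 ∧ t.1.1 k + 1 = p)

theorem inv_good (hL0 : ∀ c x, x c = 0 → ¬ L c x) (hL1 : ∀ c x, x c = p → L c x)
    {t : ((ℕ → ℕ) × Equiv.Perm ℕ) × ℕ} (ht : Good L p k t) :
    Good L p k (inv k t) ∧ inv k (inv k t) = t ∧ inv k t ≠ t := by
  obtain ⟨s, i⟩ := t
  obtain ⟨hs, hi, hd, hB⟩ := ht
  dsimp only at hs hi hd hB
  by_cases h0 : i = 0
  · subst h0
    have hx := exit_zero hL1 hs hd (by simpa using hB)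
    have e : inv k (s, 0) = (fwd k s, k + 1) := by simp [inv]
    rw [e]
    refine ⟨⟨fwd_mem hs hx, by simp, ?_, by simp⟩, ?_, by simp⟩
    · exact (door_last _ _).2 (door_fwd.1 hd)
    · simp [inv, bwd_fwd]
  by_cases h1 : i = k + 1
  · subst h1
    have hx := exit_last hL0 hL1 hs hd
    have e : inv k (s, k + 1) = (bwd k s, 0) := by simp [inv]
    rw [e]
    refine ⟨⟨bwd_mem hs, by simp, ?_, ?_⟩, ?_, by simp⟩
    · rw [door_fwd, fwd_bwd k s hx]
      exact (door_last _ _).1 hd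
    · have := hs.1 k (by omega)
      have := hx k
      simp only [bwd, Equiv.trans_apply, rot_symm_apply]
      grind
    · simp [inv, fwd_bwd k s hx]
  · have e : inv k (s, i) = (mid i s, i) := by simp [inv, h0, h1]
    rw [e]
    refine ⟨⟨mid_mem (by omega) hs, hi, door_mid.1 hd, by simp [h0]⟩, ?_, ?_⟩
    · simp [inv, h0, h1, mid_mid]
    · intro h
      have h2 := congrArg (fun t : ((ℕ → ℕ) × Equiv.Perm ℕ) × ℕ => t.1.2 (s.2.symm i)) h
      simp [mid] at h2
      omega

open Classical in
theorem count_eq (hp : 0 < p) (hL0 : ∀ c x, x c = 0 → ¬ L c x) (hL1 : ∀ c x, x c = p → L c x)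
    (k : ℕ) : (∑ s ∈ (simp_finite p k).toFinset,
      if Rainbow k (glab L s) then (1 : ZMod 2) else 0) = 1 := by
  induction k with
  | zero =>
    have : (simp_finite p 0).toFinset = {(fun _ => p, Equiv.refl ℕ)} := by
      ext ⟨q, τ⟩
      simp only [Set.Finite.mem_toFinset, Finset.mem_singleton, Simp, Set.mem_ofPred_eq]
      constructor
      · rintro ⟨-, h2, h3⟩
        refine Prod.ext (funext fun c => h2 c (by omega)) (Equiv.ext fun c => h3 c (by omega))
      · intro h
        cases h
        simp
    rw [this, Finset.sum_singleton, if_pos]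
    intro m hm
    refine ⟨0, le_rfl, ?_⟩
    have : glab L (fun _ => p, Equiv.refl ℕ) 0 ≤ 0 :=
      Nat.sInf_le (hL1 0 _ (by simp [vtx]))
    omega
  | succ k ih =>
    have e1 : ∀ s ∈ (simp_finite p (k + 1)).toFinset,
        (if Rainbow (k + 1) (glab L s) then (1 : ZMod 2) else 0) =
        ∑ i ∈ Finset.range (k + 2), if Door k (glab L s) i then (1 : ZMod 2) else 0 := by
      intro s hs
      rw [door_parity]
      intro j hj
      exact glab_le hL1 (by simpa using hs) j hj
    rw [Finset.sum_congr rfl e1, ← Finset.sum_product', ← Finset.sum_filter]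
    rw [← Finset.sum_filter_not_add_sum_filter _
      (fun t : ((ℕ → ℕ) × Equiv.Perm ℕ) × ℕ => t.2 = 0 ∧ t.1.2 k = 0 ∧ t.1.1 k + 1 = p)]
    have hz : (∑ t ∈ Finset.filter (fun t : ((ℕ → ℕ) × Equiv.Perm ℕ) × ℕ =>
        ¬ (t.2 = 0 ∧ t.1.2 k = 0 ∧ t.1.1 k + 1 = p))
        (Finset.filter (fun t => Door k (glab L t.1) t.2)
          ((simp_finite p (k + 1)).toFinset ×ˢ Finset.range (k + 2))), (1 : ZMod 2)) = 0 := by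
      have hmem : ∀ t, t ∈ Finset.filter (fun t : ((ℕ → ℕ) × Equiv.Perm ℕ) × ℕ =>
        ¬ (t.2 = 0 ∧ t.1.2 k = 0 ∧ t.1.1 k + 1 = p))
        (Finset.filter (fun t => Door k (glab L t.1) t.2)
          ((simp_finite p (k + 1)).toFinset ×ˢ Finset.range (k + 2))) ↔ Good L p k t := by
        intro t
        simp only [Finset.mem_filter, Finset.mem_product, Set.Finite.mem_toFinset,
          Finset.mem_range, Good, and_assoc]
      refine Finset.sum_involution (fun t _ => inv k t) (fun t ht => by decide)
        (fun t ht _ => (inv_good hL0 hL1 ((hmem t).1 ht)).2.2)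
        (fun t ht => (hmem _).2 (inv_good hL0 hL1 ((hmem t).1 ht)).1)
        (fun t ht => (inv_good hL0 hL1 ((hmem t).1 ht)).2.1)
    rw [hz, zero_add]
    refine Eq.trans ?_ ih
    rw [← Finset.sum_filter]
    refine Finset.sum_nbij' (fun t => fwd k t.1) (fun s => (bwd k s, 0)) ?_ ?_ ?_ ?_ ?_
    · rintro ⟨s, i⟩ ht
      simp only [Finset.mem_filter, Finset.mem_product, Set.Finite.mem_toFinset,
          Finset.mem_range] at ht ⊢
      obtain ⟨⟨⟨hs, hi⟩, hd⟩, rfl, h0, h1⟩ := ht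
      exact ⟨fwd_mem' hs h0 h1, door_fwd.1 hd⟩
    · intro s hs
      simp only [Finset.mem_filter, Finset.mem_product, Set.Finite.mem_toFinset,
          Finset.mem_range] at hs ⊢
      obtain ⟨hs, hr⟩ := hs
      have hk := hs.2.2 k le_rfl
      have hx : ∀ c, s.2 c = k → s.1 c ≠ 0 := by
        intro c hc
        have : c = k := s.2.injective (hc.trans hk.symm)
        have := hs.2.1 c (by omega)
        omega
      refine ⟨⟨⟨bwd_mem' hp hs, by simp⟩, ?_⟩, trivial, ?_, ?_⟩
      · rw [door_fwd, fwd_bwd k s hx]; exact hr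
      · simp [bwd, hk, rot_symm_apply]
      · have := hs.2.1 k le_rfl
        simp only [bwd]; grind
    · rintro ⟨s, i⟩ ht
      simp only [Finset.mem_filter] at ht
      simp [bwd_fwd, ht.2.1]
    · intro s hs
      simp only [Finset.mem_filter, Set.Finite.mem_toFinset] at hs
      have hk := hs.1.2.2 k le_rfl
      refine fwd_bwd k s ?_
      intro c hc
      have : c = k := s.2.injective (hc.trans hk.symm)
      have := hs.1.2.1 c (by omega)
      omega
    · intros; rfl

/-- Kuhn's lemma. -/
theorem kuhn (hp : 0 < p) (hL0 : ∀ c x, x c = 0 → ¬ L c x) (hL1 : ∀ c x, x c = p → L c x)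
    (n : ℕ) : ∃ q : ℕ → ℕ, (∀ c < n, q c < p) ∧ ∀ c < n, ∃ r s : ℕ → ℕ,
      (∀ d < n, q d ≤ r d ∧ r d ≤ q d + 1) ∧ (∀ d < n, q d ≤ s d ∧ s d ≤ q d + 1) ∧
      L c r ∧ ¬ L c s := by
  classical
  have h := count_eq hp hL0 hL1 n
  obtain ⟨s, hs, hne⟩ := Finset.exists_ne_zero_of_sum_ne_zero (by rw [h]; decide)
  have hr : Rainbow n (glab L s) := by
    by_contra hc
    simp [hc] at hne
  replace hs : s ∈ Simp p n := by simpa using hs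
  refine ⟨s.1, hs.1, fun c hc => ?_⟩
  obtain ⟨j, hj, ej⟩ := hr c hc.le
  obtain ⟨i, hi, ei⟩ := hr n le_rfl
  have hb : ∀ j, ∀ d < n, s.1 d ≤ vtx s.1 s.2 j d ∧ vtx s.1 s.2 j d ≤ s.1 d + 1 := by
    intro j d _
    simp only [vtx]; grind
  refine ⟨vtx s.1 s.2 j, vtx s.1 s.2 i, hb j, hb i, ?_, ?_⟩
  · have hne : {c | L c (vtx s.1 s.2 j)}.Nonempty := by
      refine ⟨n, hL1 _ _ ?_⟩
      have := hs.2.1 n le_rfl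
      have := hs.2.2 n le_rfl
      simp only [vtx]; grind
    have hm := Nat.sInf_mem hne
    have e' : sInf {c | L c (vtx s.1 s.2 j)} = c := ej
    rw [e'] at hm
    exact hm
  · intro hcon
    have : glab L s i ≤ c := Nat.sInf_le hcon
    omega
end

/-- Closed-cover form of the Poincare–Miranda theorem on the unit cube. -/
theorem miranda (n : ℕ) (A B : Fin n → Set (Fin n → ℝ)) (hA : ∀ i, IsClosed (A i))
    (hB : ∀ i, IsClosed (B i)) (hAB : ∀ i, ∀ y ∈ Set.Icc (0 : Fin n → ℝ) 1, y ∈ A i ∨ y ∈ B i)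
    (h0 : ∀ i, ∀ y ∈ Set.Icc (0 : Fin n → ℝ) 1, y i = 0 → y ∈ A i)
    (h1 : ∀ i, ∀ y ∈ Set.Icc (0 : Fin n → ℝ) 1, y i = 1 → y ∈ B i) :
    ∃ y ∈ Set.Icc (0 : Fin n → ℝ) 1, ∀ i, y ∈ A i ∧ y ∈ B i := by
  have key : ∀ N : ℕ, ∃ z ∈ Set.Icc (0 : Fin n → ℝ) 1, ∀ i, ∃ r ∈ B i, ∃ s ∈ A i,
      dist r z ≤ 1 / ((N : ℝ) + 1) ∧ dist s z ≤ 1 / ((N : ℝ) + 1) := by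
    intro N
    set P : (ℕ → ℕ) → (Fin n → ℝ) := fun x i => (x i : ℝ) / ((N : ℝ) + 1) with hP
    have hN : (0 : ℝ) < (N : ℝ) + 1 := by positivity
    have hPm : ∀ x : ℕ → ℕ, (∀ c < n, x c ≤ N + 1) → P x ∈ Set.Icc (0 : Fin n → ℝ) 1 := by
      intro x hx
      refine ⟨fun i => by simp only [hP, Pi.zero_apply]; positivity, fun i => ?_⟩
      simp only [hP, Pi.one_apply]
      rw [div_le_one hN]
      exact_mod_cast hx i i.2
    obtain ⟨q, hq, h⟩ := kuhn (p := N + 1)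
      (L := fun c x => x c = N + 1 ∨ (x c ≠ 0 ∧ ∃ h : c < n, P x ∉ A ⟨c, h⟩))
      (by omega) (by intro c x hx; simp [hx]) (by intro c x hx; exact Or.inl hx) n
    have hd : ∀ r : ℕ → ℕ, (∀ d < n, q d ≤ r d ∧ r d ≤ q d + 1) →
        dist (P r) (P q) ≤ 1 / ((N : ℝ) + 1) := by
      intro r hr
      rw [dist_pi_le_iff (by positivity)]
      intro i
      obtain ⟨ha, hb⟩ := hr i i.2
      have ha' : (q i : ℝ) ≤ r i := by exact_mod_cast ha
      have hb' : (r i : ℝ) ≤ q i + 1 := by exact_mod_cast hb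
      simp only [hP]
      rw [Real.dist_eq, ← sub_div, abs_div, abs_of_pos hN]
      apply div_le_div_of_nonneg_right _ hN.le
      rw [abs_le]; constructor <;> linarith
    refine ⟨P q, hPm q (fun c hc => (hq c hc).le), fun i => ?_⟩
    obtain ⟨r, s, hr, hs, hLr, hLs⟩ := h i i.2
    have hrm := hPm r (fun c hc => by have := hq c hc; have := (hr c hc).2; omega)
    have hsm := hPm s (fun c hc => by have := hq c hc; have := (hs c hc).2; omega)
    refine ⟨P r, ?_, P s, ?_, hd r hr, hd s hs⟩
    · rcases hLr with hLr | ⟨_, _, hLr⟩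
      · apply h1 i _ hrm
        simp only [hP, hLr]
        push_cast
        exact div_self hN.ne'
      · exact (hAB i _ hrm).resolve_left hLr
    · by_cases hs0 : s i = 0
      · exact h0 i _ hsm (by simp [hP, hs0])
      · by_contra hcon
        exact hLs (Or.inr ⟨hs0, i.2, hcon⟩)
  choose z hz r hr s hs hrz hsz using key
  obtain ⟨y, hy, φ, hφ, hlim⟩ := (isCompact_Icc (a := (0 : Fin n → ℝ)) (b := 1)).tendsto_subseq hz
  refine ⟨y, hy, fun i => ?_⟩
  have hε : Filter.Tendsto (fun k => 1 / (((φ k : ℕ) : ℝ) + 1)) Filter.atTop (nhds 0) :=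
    tendsto_one_div_add_atTop_nhds_zero_nat.comp hφ.tendsto_atTop
  have conv : ∀ u : ℕ → Fin n → ℝ, (∀ N, dist (u N) (z N) ≤ 1 / ((N : ℝ) + 1)) →
      Filter.Tendsto (fun k => u (φ k)) Filter.atTop (nhds y) := by
    intro u hu
    refine (tendsto_iff_of_dist ?_).2 hlim
    exact squeeze_zero (fun _ => dist_nonneg) (fun k => hu (φ k)) hε
  exact ⟨(hA i).mem_of_tendsto (conv _ fun N => hsz N i) (Filter.Eventually.of_forall fun k => hs _ i),
    (hB i).mem_of_tendsto (conv _ fun N => hrz N i) (Filter.Eventually.of_forall fun k => hr _ i)⟩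

end Kuhn

open Real

/-- Kakutani step of the paper's Theorem 2: the lower-level Nash equilibrium set is nonempty at every leader strategy. -/
theorem stmt_11
    (m I : ℕ) (hm : 1 ≤ m) (hI : 1 ≤ I)
    (X : Set (Fin m → ℝ)) (hXne : X.Nonempty) (hXc : IsCompact X)
    (f : (Fin m → ℝ) → (Fin I → ℝ) → ℝ)
    (hf : Continuous fun p : (Fin m → ℝ) × (Fin I → ℝ) => f p.1 p.2)
    (Y : Fin I → Set ℝ)
    (hYne : ∀ i, (Y i).Nonempty) (hYc : ∀ i, IsCompact (Y i))
    (hYconv : ∀ i, Convex ℝ (Y i)) (hY0 : ∀ i, (0 : ℝ) ∈ Y i)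
    (b l Sig : Fin I → ℝ)
    (hb : ∀ i, 0 < b i) (hl : ∀ i, 0 ≤ l i) (hSig : ∀ i, 0 ≤ Sig i)
    (μ : Fin I → (Fin m → ℝ) → ℝ) (hμ : ∀ i, Continuous (μ i))
    (S : Fin I → (Fin m → ℝ) → Set ℝ)
    (hS : ∀ i x, S i x = {y ∈ Y i | μ i x * y + l i * Real.sqrt (Sig i) * |y| ≤ b i})
    (φ : Fin I → (Fin m → ℝ) → (Fin I → ℝ) → ℝ)
    (hφc : ∀ i, Continuous fun p : (Fin m → ℝ) × (Fin I → ℝ) => φ i p.1 p.2)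
    (hφconv : ∀ i x y, ConvexOn ℝ Set.univ fun t : ℝ => φ i x (Function.update y i t))
    (Nash : (Fin m → ℝ) → Set (Fin I → ℝ))
    (hNash : ∀ x, Nash x = {y : Fin I → ℝ | ∀ i, y i ∈ S i x ∧
      ∀ t ∈ S i x, φ i x y ≤ φ i x (Function.update y i t)})
    : ∀ x : Fin m → ℝ, (Nash x).Nonempty := by
  intro x
  have hcl : ∀ i, ∃ a c : ℝ, a ≤ c ∧ S i x = Set.Icc a c := by
    intro i
    have hc : IsCompact (S i x) := by
      have : S i x = Y i ∩ {y | μ i x * y + l i * Real.sqrt (Sig i) * |y| ≤ b i} := by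
        rw [hS]; rfl
      rw [this]
      exact (hYc i).inter_right (isClosed_le (by fun_prop) continuous_const)
    have hne : (0 : ℝ) ∈ S i x := by
      rw [hS]; exact ⟨hY0 i, by simpa using (hb i).le⟩
    have hk : 0 ≤ l i * Real.sqrt (Sig i) := mul_nonneg (hl i) (Real.sqrt_nonneg _)
    have hcv : Convex ℝ (S i x) := by
      rw [hS]
      intro u hu v hv α β hα hβ hαβ
      refine ⟨hYconv i hu.1 hv.1 hα hβ hαβ, ?_⟩
      have h1 := mul_le_mul_of_nonneg_left hu.2 hα
      have h2 := mul_le_mul_of_nonneg_left hv.2 hβ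
      have h3 : |α * u + β * v| ≤ α * |u| + β * |v| := by
        refine (abs_add_le _ _).trans_eq ?_
        rw [abs_mul, abs_mul, abs_of_nonneg hα, abs_of_nonneg hβ]
      have h4 := mul_le_mul_of_nonneg_left h3 hk
      have h5 : α * b i + β * b i = b i := by rw [← add_mul, hαβ, one_mul]
      simp only [smul_eq_mul]
      nlinarith
    have hcon : IsConnected (S i x) := ⟨⟨0, hne⟩, hcv.isPreconnected⟩
    have e := eq_Icc_of_connected_compact hcon hc
    refine ⟨_, _, ?_, e⟩
    rw [e] at hne
    exact hne.1.trans hne.2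
  choose a c hac hSI using hcl
  let Q : (Fin I → ℝ) → (Fin I → ℝ) := fun w i => a i + w i * (c i - a i)
  have hQ : Continuous Q := by fun_prop
  have hQm : ∀ w ∈ Set.Icc (0 : Fin I → ℝ) 1, ∀ i, Q w i ∈ Set.Icc (a i) (c i) := by
    intro w hw i
    have h1 : 0 ≤ w i := hw.1 i
    have h2 : w i ≤ 1 := hw.2 i
    have h3 := hac i
    simp only [Q]
    constructor <;> nlinarith
  have hφ' : ∀ i, Continuous (φ i x) := fun i =>
    (hφc i).comp (Continuous.prodMk continuous_const continuous_id)
  have hclosed : ∀ (i : Fin I) (op : ℝ → ℝ → ℝ), Continuous (fun z : ℝ × ℝ => op z.1 z.2) →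
      IsClosed {w : Fin I → ℝ | ∀ t ∈ Set.Icc (a i) (c i),
        φ i x (Q w) ≤ φ i x (Function.update (Q w) i (op t (Q w i)))} := by
    intro i op hop
    simp only [Set.ofPred_forall]
    refine isClosed_iInter fun t => isClosed_iInter fun _ => isClosed_le ((hφ' i).comp hQ) ?_
    refine (hφ' i).comp (hQ.update i ?_)
    exact hop.comp (Continuous.prodMk continuous_const ((continuous_apply i).comp hQ))
  obtain ⟨w, hw, hAB⟩ := Kuhn.miranda I _ _ (fun i => hclosed i min continuous_min)
    (fun i => hclosed i max continuous_max)
    (by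
      intro i w hw
      by_contra hcon
      simp only [Set.mem_ofPred_eq, not_or, not_forall, not_le] at hcon
      obtain ⟨⟨t, ht, h1⟩, ⟨u, hu, h2⟩⟩ := hcon
      have hseg : Q w i ∈ segment ℝ (min t (Q w i)) (max u (Q w i)) := by
        rw [segment_eq_Icc ((min_le_right _ _).trans (le_max_right _ _))]
        exact ⟨min_le_right _ _, le_max_right _ _⟩
      have := (hφconv i x (Q w)).le_on_segment (Set.mem_univ _) (Set.mem_univ _) hseg
      simp only [Function.update_eq_self] at this
      exact absurd this (not_le.2 (max_lt h1 h2)))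
    (by
      intro i w hw h0 t ht
      have : Q w i = a i := by simp [Q, h0]
      rw [min_eq_right (by rw [this]; exact ht.1), Function.update_eq_self])
    (by
      intro i w hw h0 t ht
      have : Q w i = c i := by simp [Q, h0]
      rw [max_eq_right (by rw [this]; exact ht.2), Function.update_eq_self])
  refine ⟨Q w, ?_⟩
  rw [hNash]
  intro i
  rw [hSI]
  refine ⟨hQm w hw i, fun t ht => ?_⟩
  rcases le_total t (Q w i) with h | h
  · have := (hAB i).1 t ht
    rwa [min_eq_left h] at this
  · have := (hAB i).2 t ht
    rwa [max_eq_left h] at this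
end

section
/- The marginal function V : ℝᵐ → ℝ defined by V(x) = sup { f(x, y) : y ∈ Nash(x) } is upper semicontinuous at every point x ∈ ℝᵐ. (This is the key claim in the proof of the paper's Lemma 6, obtained from the continuity theorem for marginal functions.) -/
open Real

theorem aux_det_poly {E : Type*} [NormedAddCommGroup E] [InnerProductSpace ℝ E]
    [FiniteDimensional ℝ E] (v : ℕ → ℝ) (hv : Function.Injective v) (A : E →L[ℝ] E) :
    (1 + A).det = ∑ j ∈ Finset.range (Module.finrank ℝ E + 1),
      (1 + v j • A).det *
        (Lagrange.basis (Finset.range (Module.finrank ℝ E + 1)) v j).eval 1 := by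
  classical
  set n := Module.finrank ℝ E
  let b := Module.finBasis ℝ E
  let M := LinearMap.toMatrix b b (A : E →ₗ[ℝ] E)
  let p : Polynomial ℝ := Matrix.det ((Polynomial.X : Polynomial ℝ) • M.map Polynomial.C
      + (1 : Matrix (Fin n) (Fin n) ℝ).map Polynomial.C)
  have hdeg : p.natDegree ≤ n := by
    have h := Polynomial.natDegree_det_X_add_C_le M 1
    rw [Fintype.card_fin] at h
    exact h
  have hev : ∀ t : ℝ, p.eval t = (1 + t • A).det := by
    intro t
    have h1 : (1 + t • A).det = (t • M + 1).det := by
      rw [ContinuousLinearMap.det, ← LinearMap.det_toMatrix b]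
      congr 1
      have : ((1 + t • A : E →L[ℝ] E) : E →ₗ[ℝ] E) = t • (A : E →ₗ[ℝ] E) + LinearMap.id := by
        ext x; simp [add_comm]
      rw [this, map_add, map_smul, LinearMap.toMatrix_id]
    rw [h1]
    simp only [p]
    rw [← Polynomial.coe_evalRingHom, RingHom.map_det]
    congr 1
    ext i j
    simp [Matrix.one_apply]
    split_ifs <;> simp [mul_comm]
  have hlt : p.degree < (Finset.range (n+1)).card := by
    rw [Finset.card_range]
    refine lt_of_le_of_lt Polynomial.degree_le_natDegree ?_
    exact_mod_cast Nat.lt_succ_of_le hdeg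
  have h := Lagrange.eq_interpolate (v := v) (hv.injOn) hlt
  have h2 := congrArg (Polynomial.eval 1) h
  rw [hev, one_smul, Lagrange.interpolate_apply, Polynomial.eval_finsetSum] at h2
  rw [h2]
  refine Finset.sum_congr rfl fun j _ => ?_
  rw [Polynomial.eval_mul, Polynomial.eval_C, hev]

theorem aux_small {E : Type*} [NormedAddCommGroup E] [InnerProductSpace ℝ E]
    [FiniteDimensional ℝ E] [Nontrivial E] [MeasurableSpace E] [BorelSpace E]
    (r : E → E) (hr : ∀ x ∈ Metric.closedBall (0:E) 1, ContDiffAt ℝ 1 r x)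
    (hmap : ∀ x ∈ Metric.closedBall (0:E) 1, ‖r x‖ = 1)
    (hfix : ∀ x : E, ‖x‖ = 1 → r x = x) :
    ∃ δ > 0, ∀ t : ℝ, 0 < t → t < δ →
      ∫ x in Metric.ball (0:E) 1, (1 + t • (fderiv ℝ r x - 1)).det
        = MeasureTheory.volume.real (Metric.ball (0:E) 1) := by
  set B := Metric.closedBall (0:E) 1 with hB
  set U := Metric.ball (0:E) 1 with hU
  have hUB : U ⊆ B := Metric.ball_subset_closedBall
  have hBc : IsCompact B := isCompact_closedBall _ _
  set A : E → (E →L[ℝ] E) := fun x => fderiv ℝ r x - 1 with hA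
  have hAc : ContinuousOn A B := by
    intro x hx
    refine ContinuousAt.continuousWithinAt ?_
    exact ((hr x hx).continuousAt_fderiv (by norm_num)).sub continuousAt_const
  have hrd : ∀ x ∈ B, HasFDerivAt r (fderiv ℝ r x) x := fun x hx =>
    ((hr x hx).differentiableAt (by norm_num)).hasFDerivAt
  obtain ⟨C, hC⟩ := hBc.exists_bound_of_continuousOn hAc
  have hCpos : 0 < |C| + 1 := by positivity
  have hdet : ∃ η > 0, ∀ L : E →L[ℝ] E, ‖L‖ < η → 0 < (1 + L).det := by
    have h1 : Continuous fun L : E →L[ℝ] E => (1 + L).det :=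
      ContinuousLinearMap.continuous_det.comp (continuous_const.add continuous_id)
    have h2 : ∀ᶠ L in nhds (0 : E →L[ℝ] E), 0 < (1 + L).det := by
      refine h1.continuousAt.eventually_const_lt ?_
      simp [ContinuousLinearMap.det]
    obtain ⟨η, h, h'⟩ := Metric.eventually_nhds_iff.1 h2
    exact ⟨η, h, fun L hL => h' (by simpa using hL)⟩
  obtain ⟨η, hη, hηd⟩ := hdet
  refine ⟨min 1 (min (η / (|C|+1)) ((1/2) / (|C|+1))), by positivity, ?_⟩
  intro t ht0 ht
  have ht1 : t < 1 := lt_of_lt_of_le ht (min_le_left _ _)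
  have ht2 : t * (|C|+1) < η := by
    rw [← lt_div_iff₀ hCpos]
    exact lt_of_lt_of_le ht ((min_le_right _ _).trans (min_le_left _ _))
  have ht3 : t * (|C|+1) < 1/2 := by
    rw [← lt_div_iff₀ hCpos]
    exact lt_of_lt_of_le ht ((min_le_right _ _).trans (min_le_right _ _))
  have hbd : ∀ x ∈ B, ‖t • A x‖ ≤ t * (|C|+1) := by
    intro x hx
    rw [norm_smul, Real.norm_of_nonneg ht0.le]
    have := hC x hx
    have := le_abs_self C
    gcongr; linarith
  set F : E → E := fun x => x + t • (r x - x) with hF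
  have hFd : ∀ x ∈ B, HasFDerivAt F (1 + t • A x) x := by
    intro x hx
    have h1 : HasFDerivAt (fun x : E => x) (1 : E →L[ℝ] E) x := hasFDerivAt_id x
    exact h1.add (((hrd x hx).sub h1).const_smul t)
  have happ : ApproximatesLinearOn F ((ContinuousLinearEquiv.refl ℝ E : E ≃L[ℝ] E) : E →L[ℝ] E) B (1/2) := by
    rw [ApproximatesLinearOn.approximatesLinearOn_iff_lipschitzOnWith]
    refine Convex.lipschitzOnWith_of_nnnorm_hasFDerivWithin_le (f' := fun x => t • A x) (𝕜 := ℝ) ?_ ?_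
      (convex_closedBall _ _)
    · intro x hx
      have h1 : HasFDerivAt (⇑((ContinuousLinearEquiv.refl ℝ E : E ≃L[ℝ] E) : E →L[ℝ] E)) (1 : E →L[ℝ] E) x := hasFDerivAt_id x
      have := ((hFd x hx).sub h1).hasFDerivWithinAt (s := B)
      rwa [add_sub_cancel_left] at this
    · intro x hx
      rw [← NNReal.coe_le_coe]
      have := hbd x hx
      simp only [coe_nnnorm]
      push_cast
      linarith
  have hcN : (1/2 : NNReal) < (‖((ContinuousLinearEquiv.refl ℝ E).symm : E →L[ℝ] E)‖₊)⁻¹ := by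
    have : ‖((ContinuousLinearEquiv.refl ℝ E).symm : E →L[ℝ] E)‖₊ = 1 := by
      rw [← NNReal.coe_inj]
      simp
    rw [this]
    norm_num
  have hinj : Set.InjOn F B := happ.injOn (Or.inr hcN)
  have hopen : IsOpen (F '' U) :=
    (happ.mono_set hUB).open_image ((ContinuousLinearEquiv.refl ℝ E).toNonlinearRightInverse)
      Metric.isOpen_ball (Or.inr hcN)
  have hFU : ∀ x ∈ U, F x ∈ U := by
    intro x hx
    have h1 : F x = (1 - t) • x + t • r x := by simp only [hF]; module
    have hx1 : ‖x‖ < 1 := by simpa [hU] using hx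
    have : ‖F x‖ < 1 := by
      rw [h1]
      calc ‖(1 - t) • x + t • r x‖ ≤ ‖(1 - t) • x‖ + ‖t • r x‖ := norm_add_le _ _
        _ = (1 - t) * ‖x‖ + t * 1 := by
            rw [norm_smul, norm_smul, hmap x (hUB hx), Real.norm_of_nonneg ht0.le,
              Real.norm_of_nonneg (by linarith)]
        _ < 1 := by nlinarith
    simpa [hU] using this
  have himg : F '' U = U := by
    apply Set.Subset.antisymm
    · rintro _ ⟨x, hx, rfl⟩; exact hFU x hx
    · refine (convex_ball (0:E) 1).isPreconnected.subset_of_closure_inter_subset hopen ?_ ?_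
      · have h0 : (0:E) ∈ U := by simp [hU]
        exact ⟨F 0, hFU 0 h0, 0, h0, rfl⟩
      · rintro y ⟨hy, hyU⟩
        have hcl : IsClosed (F '' B) := (hBc.image_of_continuousOn happ.continuousOn).isClosed
        have : y ∈ F '' B := closure_minimal (Set.image_mono hUB) hcl hy
        obtain ⟨x, hx, rfl⟩ := this
        have hx1 : ‖x‖ ≤ 1 := by simpa [hB] using hx
        rcases hx1.lt_or_eq with h | h
        · exact ⟨x, by simpa [hU] using h, rfl⟩
        · exfalso
          have : F x = x := by simp [hF, hfix x h]
          rw [this] at hyU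
          have : ‖x‖ < 1 := by simpa [hU] using hyU
          linarith
  have hcv := MeasureTheory.integral_image_eq_integral_abs_det_fderiv_smul (MeasureTheory.volume)
    (s := U) (f := F) (f' := fun x => 1 + t • A x) Metric.isOpen_ball.measurableSet
    (fun x hx => (hFd x (hUB hx)).hasFDerivWithinAt) (hinj.mono hUB) (fun _ => (1:ℝ))
  rw [himg] at hcv
  simp only [smul_eq_mul, mul_one, MeasureTheory.setIntegral_const] at hcv
  rw [hcv]
  refine MeasureTheory.setIntegral_congr_fun Metric.isOpen_ball.measurableSet fun x hx => ?_
  exact (abs_of_pos (hηd _ (lt_of_le_of_lt (hbd x (hUB hx)) ht2))).symm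

theorem aux_no_retract {E : Type*} [NormedAddCommGroup E] [InnerProductSpace ℝ E]
    [FiniteDimensional ℝ E] [Nontrivial E] [MeasurableSpace E] [BorelSpace E]
    (r : E → E) (hr : ∀ x ∈ Metric.closedBall (0:E) 1, ContDiffAt ℝ 1 r x)
    (hmap : ∀ x ∈ Metric.closedBall (0:E) 1, ‖r x‖ = 1)
    (hfix : ∀ x : E, ‖x‖ = 1 → r x = x) : False := by
  obtain ⟨δ, hδ, h⟩ := aux_small r hr hmap hfix
  let v : ℕ → ℝ := fun j => δ / (j + 2)
  have hv : Function.Injective v := by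
    intro i j hij
    simp only [v] at hij
    rw [div_eq_div_iff (by positivity) (by positivity)] at hij
    have := mul_left_cancel₀ hδ.ne' hij
    have : (i:ℝ) = j := by linarith
    exact_mod_cast this
  have hv0 : ∀ j, 0 < v j := fun j => by simp only [v]; positivity
  have hvδ : ∀ j, v j < δ := fun j => by
    simp only [v]; rw [div_lt_iff₀ (by positivity)]
    have : (0:ℝ) ≤ j := by positivity
    nlinarith
  have hz : ∀ x ∈ Metric.ball (0:E) 1, (1 + (fderiv ℝ r x - 1)).det = 0 := by
    intro x hx
    have hxB := Metric.ball_subset_closedBall hx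
    rw [add_sub_cancel]
    by_contra hne
    have hd : HasFDerivAt r (fderiv ℝ r x) x :=
      ((hr x hxB).differentiableAt (by norm_num)).hasFDerivAt
    have h1 := hd.norm_sq
    have h2 : HasFDerivAt (fun y => ‖r y‖ ^ 2) (0 : E →L[ℝ] ℝ) x := by
      refine (hasFDerivAt_const (1:ℝ) x).congr_of_eventuallyEq ?_
      filter_upwards [Metric.isOpen_ball.mem_nhds hx] with y hy
      rw [hmap y (Metric.ball_subset_closedBall hy)]; norm_num
    have h3 := h1.unique h2
    have hsurj : Function.Surjective (fderiv ℝ r x) := by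
      have : IsUnit (LinearMap.det ((fderiv ℝ r x : E →L[ℝ] E) : E →ₗ[ℝ] E)) := isUnit_iff_ne_zero.2 hne
      have h4 := (LinearMap.isUnit_iff_isUnit_det _).2 this
      exact ((Module.End.isUnit_iff _).1 h4).surjective
    obtain ⟨w, hw⟩ := hsurj (r x)
    have h5 := congrArg (fun L : E →L[ℝ] ℝ => L w) h3
    simp [hw, hmap x hxB] at h5
  have hintegr : ∀ t : ℝ, MeasureTheory.IntegrableOn (fun x => (1 + t • (fderiv ℝ r x - 1)).det)
      (Metric.ball (0:E) 1) := by
    intro t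
    refine MeasureTheory.IntegrableOn.mono_set ?_ Metric.ball_subset_closedBall
    refine ContinuousOn.integrableOn_compact (isCompact_closedBall _ _) ?_
    intro x hx
    refine ContinuousAt.continuousWithinAt ?_
    refine ContinuousLinearMap.continuous_det.continuousAt.comp ?_
    exact continuousAt_const.add
      ((((hr x hx).continuousAt_fderiv (by norm_num)).sub continuousAt_const).const_smul t)
  set s := Finset.range (Module.finrank ℝ E + 1)
  have h0 : ∫ x in Metric.ball (0:E) 1, (1 + (fderiv ℝ r x - 1)).det = 0 :=
    MeasureTheory.setIntegral_eq_zero_of_forall_eq_zero hz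
  have h1 : ∫ x in Metric.ball (0:E) 1, (1 + (fderiv ℝ r x - 1)).det
      = MeasureTheory.volume.real (Metric.ball (0:E) 1) := by
    rw [MeasureTheory.integral_congr_ae (Filter.Eventually.of_forall fun x =>
      aux_det_poly v hv (fderiv ℝ r x - 1))]
    rw [MeasureTheory.integral_finsetSum _ (fun j _ => (hintegr (v j)).mul_const _)]
    simp_rw [MeasureTheory.integral_mul_const]
    rw [Finset.sum_congr rfl (fun j _ => by rw [h (v j) (hv0 j) (hvδ j)]), ← Finset.mul_sum,
      ← Polynomial.eval_finsetSum, Lagrange.sum_basis hv.injOn (by simp)]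
    simp
  rw [h0] at h1
  have : 0 < MeasureTheory.volume.real (Metric.ball (0:E) 1) := by
    rw [MeasureTheory.measureReal_def]
    exact ENNReal.toReal_pos (Metric.measure_ball_pos _ _ one_pos).ne' MeasureTheory.measure_ball_lt_top.ne
  linarith

theorem aux_brouwer_smooth {E : Type*} [NormedAddCommGroup E] [InnerProductSpace ℝ E]
    [FiniteDimensional ℝ E] [Nontrivial E] [MeasurableSpace E] [BorelSpace E]
    (f : E → E) (hf : ContDiff ℝ 1 f) (hlt : ∀ x : E, ‖x‖ ≤ 1 → ‖f x‖ < 1) :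
    ∃ x : E, ‖x‖ ≤ 1 ∧ f x = x := by
  by_contra! hne
  let u : E → E := fun x => x - f x
  let a : E → ℝ := fun x => inner ℝ x (u x)
  let d : E → ℝ := fun x => a x ^ 2 + ‖u x‖ ^ 2 * (1 - ‖x‖ ^ 2)
  let s : E → ℝ := fun x => (- a x + Real.sqrt (d x)) / ‖u x‖ ^ 2
  have hu : ∀ x : E, ‖x‖ ≤ 1 → 0 < ‖u x‖ ^ 2 := by
    intro x hx
    have : u x ≠ 0 := fun h => hne x hx (sub_eq_zero.1 h).symm
    positivity
  have ha : ∀ x : E, ‖x‖ = 1 → 0 < a x := by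
    intro x hx
    simp only [a, u, inner_sub_right, real_inner_self_eq_norm_sq, hx]
    have h1 := real_inner_le_norm x (f x)
    have h2 := hlt x hx.le
    rw [hx] at h1
    linarith
  have hd : ∀ x : E, ‖x‖ ≤ 1 → 0 < d x := by
    intro x hx
    have := hu x hx
    rcases hx.lt_or_eq with h | h
    · have : 0 < 1 - ‖x‖ ^ 2 := by nlinarith [norm_nonneg x]
      simp only [d]; positivity
    · have := ha x h
      simp only [d, h]; nlinarith
  have huc : ContDiff ℝ 1 u := contDiff_id.sub hf
  have hac : ContDiff ℝ 1 a := contDiff_id.inner ℝ huc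
  have hdc : ContDiff ℝ 1 d :=
    (hac.pow 2).add ((huc.norm_sq ℝ).mul (contDiff_const.sub (contDiff_id.norm_sq ℝ)))
  refine aux_no_retract (fun x => x + s x • u x) ?_ ?_ ?_
  · intro x hx
    have hx1 : ‖x‖ ≤ 1 := by simpa using hx
    have hs : ContDiffAt ℝ 1 s x :=
      (hac.neg.contDiffAt.add (hdc.contDiffAt.sqrt (hd x hx1).ne')).div
        (huc.norm_sq ℝ).contDiffAt (hu x hx1).ne'
    exact contDiffAt_id.add (hs.smul huc.contDiffAt)
  · intro x hx
    have hx1 : ‖x‖ ≤ 1 := by simpa using hx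
    have h1 : ‖x + s x • u x‖ ^ 2 = 1 := by
      rw [norm_add_sq_real, inner_smul_right, norm_smul, mul_pow, Real.norm_eq_abs, sq_abs]
      change ‖x‖ ^ 2 + 2 * (s x * a x) + s x ^ 2 * ‖u x‖ ^ 2 = 1
      have hq := Real.sq_sqrt (hd x hx1).le
      have hne := (hu x hx1).ne'
      have hs : s x * ‖u x‖ ^ 2 = - a x + Real.sqrt (d x) := by
        simp only [s]; exact div_mul_cancel₀ _ hne
      have hs2 : (s x * ‖u x‖ ^ 2 + a x) ^ 2 = d x := by rw [hs]; linear_combination hq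
      simp only [d] at hs2
      have : ‖u x‖ ^ 2 * (‖x‖ ^ 2 + 2 * (s x * a x) + s x ^ 2 * ‖u x‖ ^ 2) = ‖u x‖ ^ 2 * 1 := by
        linear_combination hs2
      exact mul_left_cancel₀ hne this
    exact (pow_eq_one_iff_of_nonneg (norm_nonneg _) two_ne_zero).1 h1
  · intro x hx
    have : s x = 0 := by
      simp only [s, d, hx]
      have := ha x hx
      norm_num [Real.sqrt_sq this.le]
    simp [this]

theorem aux_brouwer_ball {E : Type*} [NormedAddCommGroup E] [InnerProductSpace ℝ E]
    [FiniteDimensional ℝ E] [Nontrivial E] [MeasurableSpace E] [BorelSpace E]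
    (f : E → E) (hf : Continuous f) (hle : ∀ x : E, ‖f x‖ ≤ 1) :
    ∃ x : E, f x = x := by
  by_contra! hne
  have hc : Continuous fun x => ‖x - f x‖ := (continuous_id.sub hf).norm
  obtain ⟨x0, hx0, hmin⟩ := (isCompact_closedBall (0:E) 1).exists_isMinOn ⟨0, by simp⟩ hc.continuousOn
  set δ := ‖x0 - f x0‖ with hδ
  have hδ0 : 0 < δ := norm_pos_iff.2 (sub_ne_zero.2 (hne x0).symm)
  set ε := δ / 4 with hε
  have hε0 : 0 < ε := by positivity
  obtain ⟨p, hp, hpf, -⟩ := hf.exists_contDiff_approx 1 (ε := fun _ => ε) continuous_const (fun _ => hε0)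
  have hpb : ∀ x, ‖p x‖ < 1 + ε := by
    intro x
    have h1 := hpf x
    rw [dist_eq_norm] at h1
    have h2 := norm_add_le (p x - f x) (f x)
    rw [sub_add_cancel] at h2
    linarith [hle x]
  have hpos : 0 < 1 + ε := by positivity
  obtain ⟨x, hx, hfx⟩ := aux_brouwer_smooth (fun x => (1 + ε)⁻¹ • p x) (contDiff_const.smul hp) (by
    intro x _
    rw [norm_smul, Real.norm_of_nonneg (by positivity), inv_mul_lt_iff₀ hpos, mul_one]
    exact hpb x)
  have hpx : p x = (1 + ε) • x := by
    rw [← hfx, smul_smul, mul_inv_cancel₀ hpos.ne', one_smul, hfx]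
  have h1 := hmin (show x ∈ Metric.closedBall (0:E) 1 by simpa using hx)
  simp only [Set.mem_ofPred_eq] at h1
  have h2 := hpf x
  rw [dist_eq_norm, hpx] at h2
  have h3 : x - f x = ((1 + ε) • x - f x) - ε • x := by module
  have h4 : ‖x - f x‖ ≤ ‖(1 + ε) • x - f x‖ + ‖ε • x‖ := by
    rw [h3]; exact norm_sub_le _ _
  rw [norm_smul, Real.norm_of_nonneg hε0.le] at h4
  have h5 : δ ≤ ‖x - f x‖ := h1
  nlinarith

theorem aux_brouwer_pi (n : ℕ) (hn : 1 ≤ n) (K : Set (Fin n → ℝ)) (hK : IsCompact K)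
    (g : (Fin n → ℝ) → (Fin n → ℝ)) (hg : Continuous g) (hgK : ∀ y, g y ∈ K) :
    ∃ y, g y = y := by
  have : Nonempty (Fin n) := ⟨⟨0, hn⟩⟩
  let T : (Fin n → ℝ) → EuclideanSpace ℝ (Fin n) := fun y => WithLp.toLp 2 y
  have hT : Continuous T := PiLp.continuous_toLp 2 _
  have hO : Continuous fun x : EuclideanSpace ℝ (Fin n) => (WithLp.ofLp x : Fin n → ℝ) :=
    PiLp.continuous_ofLp 2 _
  obtain ⟨C, hC⟩ := hK.exists_bound_of_continuousOn (f := T) hT.continuousOn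
  set R := |C| + 1
  have hR : 0 < R := by positivity
  obtain ⟨x, hx⟩ := aux_brouwer_ball (E := EuclideanSpace ℝ (Fin n))
    (fun x => R⁻¹ • T (g (WithLp.ofLp (R • x))))
    (Continuous.const_smul (g := fun x => T (g (WithLp.ofLp (R • x))))
      (hT.comp (hg.comp (hO.comp (continuous_const_smul R)))) R⁻¹) (by
      intro x
      rw [norm_smul, Real.norm_of_nonneg (by positivity), inv_mul_le_iff₀ hR, mul_one]
      have := hC _ (hgK (WithLp.ofLp (R • x)))
      have := le_abs_self C
      simp only [R]; linarith)
  refine ⟨WithLp.ofLp (R • x), ?_⟩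
  have h1 : T (g (WithLp.ofLp (R • x))) = R • x := by
    nth_rewrite 2 [← hx]
    rw [smul_smul, mul_inv_cancel₀ hR.ne', one_smul]
  exact congrArg WithLp.ofLp h1

theorem aux_nash (n : ℕ) (hn : 1 ≤ n) (S : Fin n → Set ℝ) (hSc : ∀ i, IsCompact (S i))
    (hSconv : ∀ i, Convex ℝ (S i)) (hSne : ∀ i, (S i).Nonempty)
    (φ : Fin n → (Fin n → ℝ) → ℝ) (hφ : ∀ i, Continuous (φ i))
    (hconv : ∀ i y, ConvexOn ℝ Set.univ fun t : ℝ => φ i (Function.update y i t)) :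
    ∃ y : Fin n → ℝ, ∀ i, y i ∈ S i ∧ ∀ t ∈ S i, φ i y ≤ φ i (Function.update y i t) := by
  classical
  by_contra! hno
  set K : Set (Fin n → ℝ) := Set.univ.pi S with hKdef
  have hKc : IsCompact K := isCompact_univ_pi hSc
  have hKconv : Convex ℝ K := convex_pi fun i _ => hSconv i
  let ψ : (Fin n → ℝ) → (Fin n → ℝ) → ℝ := fun z y =>
    ∑ i, (φ i (Function.update y i (z i)) - φ i y)
  have hψc : ∀ z, Continuous (ψ z) := by
    intro z
    refine continuous_finsetSum _ fun i _ => ?_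
    exact ((hφ i).comp (continuous_id.update i continuous_const)).sub (hφ i)
  have hcov : ∀ y ∈ K, ∃ z ∈ K, ψ z y < 0 := by
    intro y hy
    obtain ⟨i, hi⟩ := hno y
    obtain ⟨t, ht, hlt⟩ := hi (hy i trivial)
    refine ⟨Function.update y i t, ?_, ?_⟩
    · intro j _
      by_cases h : j = i
      · subst h; simpa using ht
      · simpa [h] using hy j trivial
    · simp only [ψ]
      rw [Finset.sum_eq_single i]
      · simpa using hlt
      · intro j _ h
        simp [h]
      · simp
  obtain ⟨T, hTK, hT⟩ := hKc.elim_finite_subcover_image (b := K) (c := fun z => {y | ψ z y < 0})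
    (fun z _ => isOpen_lt (hψc z) continuous_const) (by
      intro y hy
      obtain ⟨z, hz, h⟩ := hcov y hy
      exact Set.mem_biUnion hz h)
  obtain ⟨hTf, hT⟩ := hT
  set F := hTf.toFinset with hF
  let w : (Fin n → ℝ) → (Fin n → ℝ) → ℝ := fun z y => max 0 (- ψ z y)
  have hw0 : ∀ z y, 0 ≤ w z y := fun z y => le_max_left _ _
  have hwc : ∀ z, Continuous (w z) := fun z => continuous_const.max (hψc z).neg
  have hex : ∀ y ∈ K, ∃ z ∈ F, ψ z y < 0 := by
    intro y hy
    obtain ⟨z, hz, h⟩ := Set.mem_iUnion₂.1 (hT hy)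
    exact ⟨z, by simpa [hF] using hz, h⟩
  let W : (Fin n → ℝ) → ℝ := fun y => ∑ z ∈ F, w z y
  have hWc : Continuous W := continuous_finsetSum _ fun z _ => hwc z
  have hW : ∀ y ∈ K, 0 < W y := by
    intro y hy
    obtain ⟨z, hz, h⟩ := hex y hy
    refine Finset.sum_pos' (fun z _ => hw0 z y) ⟨z, hz, ?_⟩
    exact lt_max_of_lt_right (by linarith)
  -- clamp
  have hIcc : ∀ i, S i = Set.Icc (sInf (S i)) (sSup (S i)) := fun i =>
    eq_Icc_of_connected_compact ⟨hSne i, (hSconv i).isPreconnected⟩ (hSc i)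
  have hle : ∀ i, sInf (S i) ≤ sSup (S i) := fun i =>
    Real.sInf_le_sSup _ (hSc i).bddBelow (hSc i).bddAbove
  let cl : (Fin n → ℝ) → (Fin n → ℝ) := fun y i => max (sInf (S i)) (min (sSup (S i)) (y i))
  have hclc : Continuous cl := continuous_pi fun i =>
    continuous_const.max (continuous_const.min (continuous_apply i))
  have hclK : ∀ y, cl y ∈ K := by
    intro y i _
    rw [hIcc i]
    exact ⟨le_max_left _ _, max_le (hle i) (min_le_left _ _)⟩
  have hclid : ∀ y ∈ K, cl y = y := by
    intro y hy
    funext i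
    have h := hy i trivial
    rw [hIcc i] at h
    simp only [cl]
    rw [min_eq_right h.2, max_eq_right h.1]
  let lam : (Fin n → ℝ) → (Fin n → ℝ) → ℝ := fun z y => w z y / W y
  have hlam0 : ∀ y ∈ K, ∀ z, 0 ≤ lam z y := fun y hy z => div_nonneg (hw0 z y) (hW y hy).le
  have hlam1 : ∀ y ∈ K, ∑ z ∈ F, lam z y = 1 := by
    intro y hy
    simp only [lam]
    rw [← Finset.sum_div]
    exact div_self (hW y hy).ne'
  let G : (Fin n → ℝ) → (Fin n → ℝ) := fun y => ∑ z ∈ F, lam z (cl y) • z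
  have hGc : Continuous G := by
    refine continuous_finsetSum _ fun z _ => ?_
    exact (((hwc z).comp hclc).div (hWc.comp hclc) (fun y => (hW _ (hclK y)).ne')).smul
      continuous_const
  have hGK : ∀ y, G y ∈ K := by
    intro y
    refine hKconv.sum_mem (fun z _ => hlam0 _ (hclK y) z) (hlam1 _ (hclK y)) ?_
    intro z hz
    exact hTK (by simpa [hF] using hz)
  obtain ⟨y, hy⟩ := aux_brouwer_pi n hn K hKc G hGc hGK
  have hyK : y ∈ K := hy ▸ hGK y
  have hy2 : ∑ z ∈ F, lam z y • z = y := by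
    have : G y = ∑ z ∈ F, lam z (cl y) • z := rfl
    rw [hclid y hyK] at this
    rw [← this, hy]
  have hψconv : ConvexOn ℝ Set.univ fun z => ψ z y := by
    refine ⟨convex_univ, ?_⟩
    intro z1 _ z2 _ a b ha hb hab
    simp only [ψ, smul_eq_mul]
    rw [Finset.mul_sum, Finset.mul_sum, ← Finset.sum_add_distrib]
    refine Finset.sum_le_sum fun i _ => ?_
    have := (hconv i y).2 (Set.mem_univ (z1 i)) (Set.mem_univ (z2 i)) ha hb hab
    simp only [smul_eq_mul] at this
    simp only [Pi.add_apply, Pi.smul_apply, smul_eq_mul]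
    have hb' : b = 1 - a := by linarith
    subst hb'
    linarith
  have hj := hψconv.map_sum_le (t := F) (w := fun z => lam z y) (p := fun z => z)
    (fun z _ => hlam0 y hyK z) (hlam1 y hyK) (fun _ _ => Set.mem_univ _)
  rw [hy2] at hj
  have h0 : ψ y y = 0 := by simp [ψ]
  rw [h0] at hj
  have hneg : ∑ z ∈ F, lam z y • ψ z y < 0 := by
    obtain ⟨z, hz, h⟩ := hex y hyK
    refine Finset.sum_neg' (fun z _ => ?_) ⟨z, hz, ?_⟩
    · by_cases h : ψ z y ≤ 0
      · exact mul_nonpos_of_nonneg_of_nonpos (hlam0 y hyK z) h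
      · have : w z y = 0 := max_eq_left (by linarith)
        simp [lam, this]
    · have : 0 < lam z y := div_pos (lt_max_of_lt_right (by linarith)) (hW y hyK)
      exact mul_neg_of_pos_of_neg this h
  linarith

/-- Key claim in the proof of Lemma 6: the marginal function V(x) = sup {f(x,y) : y ∈ Nash(x)} is upper semicontinuous. -/
theorem stmt_12
    (m I : ℕ) (hm : 1 ≤ m) (hI : 1 ≤ I)
    (X : Set (Fin m → ℝ)) (hXne : X.Nonempty) (hXc : IsCompact X)
    (f : (Fin m → ℝ) → (Fin I → ℝ) → ℝ)
    (hf : Continuous fun p : (Fin m → ℝ) × (Fin I → ℝ) => f p.1 p.2)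
    (Y : Fin I → Set ℝ)
    (hYne : ∀ i, (Y i).Nonempty) (hYc : ∀ i, IsCompact (Y i))
    (hYconv : ∀ i, Convex ℝ (Y i)) (hY0 : ∀ i, (0 : ℝ) ∈ Y i)
    (b l Sig : Fin I → ℝ)
    (hb : ∀ i, 0 < b i) (hl : ∀ i, 0 ≤ l i) (hSig : ∀ i, 0 ≤ Sig i)
    (μ : Fin I → (Fin m → ℝ) → ℝ) (hμ : ∀ i, Continuous (μ i))
    (S : Fin I → (Fin m → ℝ) → Set ℝ)
    (hS : ∀ i x, S i x = {y ∈ Y i | μ i x * y + l i * Real.sqrt (Sig i) * |y| ≤ b i})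
    (φ : Fin I → (Fin m → ℝ) → (Fin I → ℝ) → ℝ)
    (hφc : ∀ i, Continuous fun p : (Fin m → ℝ) × (Fin I → ℝ) => φ i p.1 p.2)
    (hφconv : ∀ i x y, ConvexOn ℝ Set.univ fun t : ℝ => φ i x (Function.update y i t))
    (Nash : (Fin m → ℝ) → Set (Fin I → ℝ))
    (hNash : ∀ x, Nash x = {y : Fin I → ℝ | ∀ i, y i ∈ S i x ∧
      ∀ t ∈ S i x, φ i x y ≤ φ i x (Function.update y i t)})
    (V : (Fin m → ℝ) → ℝ)
    (hV : ∀ x, V x = sSup ((f x) '' Nash x))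
    : UpperSemicontinuous V := by
  classical
  have hSmem : ∀ i x t, t ∈ S i x ↔ t ∈ Y i ∧ μ i x * t + l i * Real.sqrt (Sig i) * |t| ≤ b i := by
    intro i x t; rw [hS]; rfl
  have hk : ∀ i, 0 ≤ l i * Real.sqrt (Sig i) := fun i => mul_nonneg (hl i) (Real.sqrt_nonneg _)
  -- existence of equilibria
  have hne : ∀ x, (Nash x).Nonempty := by
    intro x
    rw [hNash]
    refine aux_nash I hI (fun i => S i x) ?_ ?_ ?_ (fun i => φ i x) ?_ (fun i y => hφconv i x y)
    · intro i
      have hcl : IsClosed {t : ℝ | μ i x * t + l i * Real.sqrt (Sig i) * |t| ≤ b i} :=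
        isClosed_le (by fun_prop) continuous_const
      have : S i x = Y i ∩ {t : ℝ | μ i x * t + l i * Real.sqrt (Sig i) * |t| ≤ b i} := by
        rw [hS]; rfl
      simp only [this]
      exact (hYc i).inter_right hcl
    · intro i t1 h1 t2 h2 p q hp hq hpq
      simp only [hSmem] at h1 h2 ⊢
      refine ⟨hYconv i h1.1 h2.1 hp hq hpq, ?_⟩
      simp only [smul_eq_mul]
      have habs : |p * t1 + q * t2| ≤ p * |t1| + q * |t2| := by
        refine (abs_add_le _ _).trans ?_
        rw [abs_mul, abs_mul, abs_of_nonneg hp, abs_of_nonneg hq]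
      have e1 := mul_le_mul_of_nonneg_left habs (hk i)
      have e2 := mul_le_mul_of_nonneg_left h1.2 hp
      have e3 := mul_le_mul_of_nonneg_left h2.2 hq
      have e4 : p * b i + q * b i = b i := by rw [← add_mul, hpq, one_mul]
      nlinarith
    · intro i
      exact ⟨0, by rw [hSmem]; exact ⟨hY0 i, by simpa using (hb i).le⟩⟩
    · intro i
      exact (hφc i).comp (Continuous.prodMk_right x)
  -- closed graph
  have hgraph : IsClosed {p : (Fin m → ℝ) × (Fin I → ℝ) | p.2 ∈ Nash p.1} := by
    refine isClosed_of_closure_subset ?_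
    intro q hq
    set G := {p : (Fin m → ℝ) × (Fin I → ℝ) | p.2 ∈ Nash p.1} with hG
    have : (nhdsWithin q G).NeBot := mem_closure_iff_nhdsWithin_neBot.1 hq
    have hGm : ∀ p ∈ G, ∀ i, p.2 i ∈ S i p.1 ∧
        ∀ t ∈ S i p.1, φ i p.1 p.2 ≤ φ i p.1 (Function.update p.2 i t) := by
      intro p hp
      have : p.2 ∈ Nash p.1 := hp
      rw [hNash] at this
      exact this
    change q.2 ∈ Nash q.1
    rw [hNash]
    intro i
    constructor
    · have hcl : IsClosed {p : (Fin m → ℝ) × (Fin I → ℝ) | p.2 i ∈ Y i ∧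
          μ i p.1 * p.2 i + l i * Real.sqrt (Sig i) * |p.2 i| ≤ b i} := by
        refine IsClosed.and ?_ ?_
        · exact (hYc i).isClosed.preimage ((continuous_apply i).comp continuous_snd)
        · have := hμ i
          exact isClosed_le (by fun_prop) continuous_const
      rw [hSmem]
      exact closure_minimal (fun p hp => (hSmem i _ _).1 (hGm p hp i).1) hcl hq
    · intro t ht
      rw [hSmem] at ht
      have key : ∀ θ : ℝ, 0 ≤ θ → θ < 1 →
          φ i q.1 q.2 ≤ φ i q.1 (Function.update q.2 i (θ * t)) := by
        intro θ h0 h1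
        have hcont : Continuous fun p : (Fin m → ℝ) × (Fin I → ℝ) =>
            φ i p.1 (Function.update p.2 i (θ * t)) :=
          (hφc i).comp (continuous_fst.prodMk (continuous_snd.update i continuous_const))
        refine le_of_tendsto_of_tendsto (b := nhdsWithin q G) ((hφc i).continuousAt.mono_left nhdsWithin_le_nhds)
          (hcont.continuousAt.mono_left nhdsWithin_le_nhds) ?_
        have hev : ∀ᶠ p : (Fin m → ℝ) × (Fin I → ℝ) in nhds q,
            μ i p.1 * (θ * t) + l i * Real.sqrt (Sig i) * |θ * t| < b i := by
          have hc : Continuous fun p : (Fin m → ℝ) × (Fin I → ℝ) =>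
              μ i p.1 * (θ * t) + l i * Real.sqrt (Sig i) * |θ * t| := by
            have := hμ i
            fun_prop
          refine hc.continuousAt.eventually_lt_const ?_
          rw [abs_mul, abs_of_nonneg h0]
          have := mul_le_mul_of_nonneg_left ht.2 h0
          have := hb i
          nlinarith
        filter_upwards [nhdsWithin_le_nhds hev, self_mem_nhdsWithin] with p hp hpG
        refine (hGm p hpG i).2 _ ?_
        rw [hSmem]
        refine ⟨?_, hp.le⟩
        have := hYconv i ht.1 (hY0 i) h0 (sub_nonneg.2 h1.le) (by ring)
        simpa using this
      have hc2 : Continuous fun θ : ℝ => φ i q.1 (Function.update q.2 i (θ * t)) :=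
        (hφc i).comp (continuous_const.prodMk
          (continuous_const.update i (continuous_id.mul continuous_const)))
      have hlim : Filter.Tendsto (fun θ : ℝ => φ i q.1 (Function.update q.2 i (θ * t)))
          (nhdsWithin 1 (Set.Iio 1)) (nhds (φ i q.1 (Function.update q.2 i t))) := by
        have := hc2.tendsto 1
        rw [one_mul] at this
        exact this.mono_left nhdsWithin_le_nhds
      refine ge_of_tendsto hlim ?_
      have h01 : ∀ᶠ θ : ℝ in nhds 1, 0 < θ := lt_mem_nhds one_pos
      filter_upwards [nhdsWithin_le_nhds h01, self_mem_nhdsWithin] with θ h0 h1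
      exact key θ h0.le h1
  have hKc : IsCompact (Set.univ.pi Y) := isCompact_univ_pi hYc
  have hsub : ∀ x, Nash x ⊆ Set.univ.pi Y := by
    intro x y hy i _
    rw [hNash] at hy
    exact ((hSmem _ _ _).1 (hy i).1).1
  have hbdd : ∀ x, BddAbove (f x '' Nash x) := by
    intro x
    have hc : Continuous (f x) := hf.comp (Continuous.prodMk_right x)
    exact (hKc.image hc).bddAbove.mono (Set.image_mono (hsub x))
  intro x c hc
  obtain ⟨c', h1, h2⟩ := exists_between hc
  have hev : ∀ᶠ x' in nhds x, ∀ y ∈ Set.univ.pi Y, y ∈ Nash x' → f x' y < c' := by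
    refine hKc.eventually_forall_of_forall_eventually ?_
    intro y _
    by_cases hy : y ∈ Nash x
    · have hlt : f x y < c' := by
        refine lt_of_le_of_lt ?_ h1
        rw [hV]
        exact le_csSup (hbdd x) ⟨y, hy, rfl⟩
      have := (hf.tendsto (x, y)).eventually_lt_const hlt
      filter_upwards [this] with p hp _
      exact hp
    · have : {p : (Fin m → ℝ) × (Fin I → ℝ) | p.2 ∈ Nash p.1}ᶜ ∈ nhds (x, y) :=
        hgraph.isOpen_compl.mem_nhds hy
      filter_upwards [this] with p hp h
      exact absurd h hp
  filter_upwards [hev] with x' hx'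
  refine lt_of_le_of_lt ?_ h2
  rw [hV]
  refine csSup_le ((hne x').image _) ?_
  rintro _ ⟨y, hy, rfl⟩
  exact (hx' y (hsub x' hy) hy).le
end

section
/- There exist x* ∈ X and y* ∈ Nash(x*) such that f(x, y) ≤ f(x*, y*) for every x ∈ X and every y ∈ Nash(x). In other words, the single-leader-multiple-follower game with second-order-cone-reformulated decision-dependent chance constraints has an equilibrium: the leader's strategy x* maximizes the leader's payoff over all leader strategies paired with lower-level Nash-equilibrium responses, and y* is a Nash equilibrium among the followers at x* (the paper's Theorem 2, existence of equilibrium). -/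
open Real

namespace KuhnSperner

/-- cyclic steps -/
def stp (d : ℕ) (k : Fin (d+1)) : Fin d → ℤ :=
  fun j => if k = Fin.last d then -1 else if k = j.castSucc then 1 else 0

/-- simplices of the Kuhn triangulation, cyclically indexed -/
def IsSimp (d : ℕ) (v : Fin (d+1) → Fin d → ℤ) : Prop :=
  ∃ σ : Equiv.Perm (Fin (d+1)), ∀ k, v (k+1) = v k + stp d (σ k)

lemma stp_inj {d : ℕ} : Function.Injective (stp d) := by
  intro k k' h
  by_cases hk : k = Fin.last d
  · by_cases hk' : k' = Fin.last d
    · rw [hk, hk']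
    · exfalso
      obtain ⟨j, rfl⟩ := Fin.exists_castSucc_eq.2 hk'
      have := congrFun h j
      simp [stp, hk] at this
  · obtain ⟨j, rfl⟩ := Fin.exists_castSucc_eq.2 hk
    have := congrFun h j
    simp only [stp, hk, if_false, if_true] at this
    by_contra hne
    split_ifs at this with h1 h2 <;> omega

lemma IsSimp.rot {d : ℕ} {v : Fin (d+1) → Fin d → ℤ} (h : IsSimp d v) (c : Fin (d+1)) :
    IsSimp d (fun k => v (k + c)) := by
  obtain ⟨σ, hσ⟩ := h
  refine ⟨(Equiv.addRight c).trans σ, fun k => ?_⟩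
  have := hσ (k + c)
  simp only [Equiv.trans_apply, Equiv.coe_addRight]
  rw [← this]
  congr 1
  abel

/-- flip a vertex -/
def flip {d : ℕ} (v : Fin (d+1) → Fin d → ℤ) (j : Fin (d+1)) : Fin (d+1) → Fin d → ℤ :=
  Function.update v j (v (j-1) + v (j+1) - v j)

lemma IsSimp.flip {d : ℕ} (h1 : (1 : Fin (d+1)) ≠ 0) {v : Fin (d+1) → Fin d → ℤ}
    (h : IsSimp d v) (j : Fin (d+1)) : IsSimp d (flip v j) := by
  obtain ⟨σ, hσ⟩ := h
  refine ⟨(Equiv.swap (j-1) j).trans σ, fun k => ?_⟩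
  have e1 : j - 1 ≠ j := by simpa using h1
  have e2 : j + 1 ≠ j := by simpa using h1
  have p1 := hσ (j-1)
  rw [sub_add_cancel] at p1
  have p2 := hσ j
  unfold KuhnSperner.flip
  simp only [Equiv.trans_apply]
  by_cases hk : k = j
  · subst hk
    rw [Function.update_of_ne e2, Function.update_self, Equiv.swap_apply_right]
    rw [p1]; abel
  · by_cases hk' : k = j - 1
    · subst hk'
      rw [Function.update_of_ne e1, sub_add_cancel, Function.update_self, Equiv.swap_apply_left,
        p2]
      abel
    · have : k + 1 ≠ j := fun h => hk' (by rw [← h]; simp)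
      rw [Function.update_of_ne this, Function.update_of_ne hk,
        Equiv.swap_apply_of_ne_of_ne hk' hk, hσ]

lemma flip_flip {d : ℕ} (h1 : (1 : Fin (d+1)) ≠ 0) (v : Fin (d+1) → Fin d → ℤ)
    (j : Fin (d+1)) : flip (flip v j) j = v := by
  have e1 : j - 1 ≠ j := by simpa using h1
  have e2 : j + 1 ≠ j := by simpa using h1
  unfold flip
  rw [Function.update_of_ne e1, Function.update_of_ne e2, Function.update_self]
  simp

lemma IsSimp.flip_ne {d : ℕ} (h1 : (1 : Fin (d+1)) ≠ 0) {v : Fin (d+1) → Fin d → ℤ}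
    (h : IsSimp d v) (j : Fin (d+1)) : KuhnSperner.flip v j ≠ v := by
  intro he
  obtain ⟨σ, hσ⟩ := h
  have e1 : j - 1 ≠ j := by simpa using h1
  have p1 := hσ (j-1)
  rw [sub_add_cancel] at p1
  have p2 := hσ j
  have := congrFun he j
  unfold KuhnSperner.flip at this
  rw [Function.update_self] at this
  have h3 : stp d (σ j) = stp d (σ (j-1)) := by
    funext i
    have q1 := congrFun p1 i
    have q2 := congrFun p2 i
    have q3 := congrFun this i
    simp only [Pi.add_apply, Pi.sub_apply] at q1 q2 q3
    linarith
  exact e1 (σ.injective (stp_inj h3)).symm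

lemma stp_sum {d : ℕ} (k : Fin (d+1)) : ((∑ j, stp d k j : ℤ) : ZMod (d+1)) = 1 := by
  by_cases hk : k = Fin.last d
  · have : (d : ZMod (d+1)) + 1 = 0 := by exact_mod_cast ZMod.natCast_self (d+1)
    simp [stp, hk]
    linear_combination -this
  · obtain ⟨j, rfl⟩ := Fin.exists_castSucc_eq.2 hk
    simp [stp, hk]

lemma IsSimp.inj {d : ℕ} {v : Fin (d+1) → Fin d → ℤ}
    (h : IsSimp d v) : Function.Injective v := by
  obtain ⟨σ, hσ⟩ := h
  have key : ∀ k : Fin (d+1), ((∑ j, v k j : ℤ) : ZMod (d+1)) = ((∑ j, v 0 j : ℤ) : ZMod (d+1)) + (k.val : ℕ) := by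
    intro k
    induction k using Fin.induction with
    | zero => simp
    | succ i ih =>
      have := hσ i.castSucc
      rw [Fin.coeSucc_eq_succ] at this
      rw [this]
      simp only [Pi.add_apply, Finset.sum_add_distrib, Int.cast_add, ih, stp_sum]
      simp
      ring
  intro k k' hkk
  have a := key k
  rw [hkk, key k'] at a
  have := add_left_cancel a
  rw [ZMod.natCast_eq_natCast_iff'] at this
  rw [Nat.mod_eq_of_lt k.2, Nat.mod_eq_of_lt k'.2] at this
  exact Fin.ext this.symm

lemma finite_at {d : ℕ} (w : Fin d → ℤ) : {v | IsSimp d v ∧ v 0 = w}.Finite := by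
  have : ∀ v : {v | IsSimp d v ∧ v 0 = w}, ∃ σ : Equiv.Perm (Fin (d+1)),
    ∀ k, v.1 (k+1) = v.1 k + stp d (σ k) := fun v => v.2.1
  choose P hP using this
  have hinj : Function.Injective P := by
    intro v v' h
    apply Subtype.ext
    funext k
    induction k using Fin.induction with
    | zero => rw [v.2.2, v'.2.2]
    | succ i ih => rw [← Fin.coeSucc_eq_succ, hP v, hP v', ih, h]
  exact Set.finite_coe_iff.1 (Finite.of_injective P hinj)

open Classical in
lemma door_count {ι : Type*} [Fintype ι] [DecidableEq ι] (x : ι → ι) (z a b : ι) (hab : a ≠ b) :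
    (((Finset.univ.filter (fun j => j ≠ z ∧
      Function.Injective (Function.update (Function.update x z a) j b))).card : ℕ) : ZMod 2) =
    (if Function.Injective (Function.update x z a) then 1 else 0) +
    (if Function.Injective (Function.update x z b) then 1 else 0) := by
  by_cases hA : Function.Injective (Function.update x z a)
  · obtain ⟨p, hp⟩ := (Finite.injective_iff_surjective.1 hA) b
    have hpz : p ≠ z := by
      rintro rfl
      rw [Function.update_self] at hp
      exact hab hp
    have hxp : x p = b := by rwa [Function.update_of_ne hpz] at hp
    have hB : ¬ Function.Injective (Function.update x z b) := by
      intro h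
      apply hpz
      apply h
      rw [Function.update_self, Function.update_of_ne hpz, hxp]
    have hJ : (Finset.univ.filter (fun j => j ≠ z ∧
      Function.Injective (Function.update (Function.update x z a) j b))) = {p} := by
      ext j
      simp only [Finset.mem_filter, Finset.mem_univ, true_and, Finset.mem_singleton]
      constructor
      · rintro ⟨hj, hinj⟩
        by_contra hne
        apply hne
        apply hinj
        rw [Function.update_self, Function.update_of_ne (Ne.symm hne), hp]
      · rintro rfl
        refine ⟨hpz, ?_⟩
        rw [show Function.update (Function.update x z a) j b = Function.update x z a by
          conv_lhs => rw [← hp]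
          exact Function.update_eq_self _ _]
        exact hA
    rw [hJ, if_pos hA, if_neg hB]
    simp
  by_cases hB : Function.Injective (Function.update x z b)
  · obtain ⟨p, hp⟩ := (Finite.injective_iff_surjective.1 hB) a
    have hpz : p ≠ z := by
      rintro rfl
      rw [Function.update_self] at hp
      exact hab hp.symm
    have hxp : x p = a := by rwa [Function.update_of_ne hpz] at hp
    have hJ : (Finset.univ.filter (fun j => j ≠ z ∧
      Function.Injective (Function.update (Function.update x z a) j b))) = {p} := by
      ext j
      simp only [Finset.mem_filter, Finset.mem_univ, true_and, Finset.mem_singleton]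
      constructor
      · rintro ⟨hj, hinj⟩
        by_contra hne
        apply hpz
        apply hinj
        rw [Function.update_of_ne (Ne.symm hne), Function.update_of_ne hpz,
          Function.update_of_ne (Ne.symm hj), Function.update_self, hxp]
      · rintro rfl
        refine ⟨hpz, ?_⟩
        rw [show Function.update (Function.update x z a) j b =
          Function.update x z b ∘ Equiv.swap z j by
          funext q
          simp only [Function.comp_apply, Function.update_apply, Equiv.swap_apply_def]
          grind]
        exact hB.comp (Equiv.injective _)
    rw [hJ, if_neg hA, if_pos hB]
    simp
  rw [if_neg hA, if_neg hB]
  rcases (Finset.univ.filter (fun j => j ≠ z ∧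
      Function.Injective (Function.update (Function.update x z a) j b))).eq_empty_or_nonempty
    with he | ⟨j, hj⟩
  · rw [he]; simp
  · simp only [Finset.mem_filter, Finset.mem_univ, true_and] at hj
    obtain ⟨hjz, hj⟩ := hj
    have hcb : x j ≠ b := by
      intro h
      apply hA
      rw [show Function.update x z a = Function.update (Function.update x z a) j b by
        funext q; simp only [Function.update_apply]; grind]
      exact hj
    have hca : x j ≠ a := by
      intro h
      apply hB
      rw [show Function.update x z b =
        Function.update (Function.update x z a) j b ∘ Equiv.swap z j by
        funext q
        simp only [Function.comp_apply, Function.update_apply, Equiv.swap_apply_def]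
        grind]
      exact hj.comp (Equiv.injective _)
    obtain ⟨p, hp⟩ := (Finite.injective_iff_surjective.1 hj) (x j)
    have hpj : p ≠ j := by
      rintro rfl
      rw [Function.update_self] at hp
      exact hcb hp.symm
    have hpz : p ≠ z := by
      rintro rfl
      rw [Function.update_of_ne hpj, Function.update_self] at hp
      exact hca hp.symm
    have hxp : x p = x j := by
      rwa [Function.update_of_ne hpj, Function.update_of_ne hpz] at hp
    have hJ : (Finset.univ.filter (fun j => j ≠ z ∧
      Function.Injective (Function.update (Function.update x z a) j b))) = {j, p} := by
      ext q
      simp only [Finset.mem_filter, Finset.mem_univ, true_and, Finset.mem_insert,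
        Finset.mem_singleton]
      constructor
      · rintro ⟨hq, hinj⟩
        by_contra hne
        push Not at hne
        apply hpj
        apply hinj
        rw [Function.update_of_ne hne.2.symm, Function.update_of_ne hne.1.symm,
          Function.update_of_ne hpz, Function.update_of_ne hjz, hxp]
      · rintro (rfl | rfl)
        · exact ⟨hjz, hj⟩
        · refine ⟨hpz, ?_⟩
          rw [show Function.update (Function.update x z a) q b =
            Function.update (Function.update x z a) j b ∘ Equiv.swap j q by
            funext r
            simp only [Function.comp_apply, Function.update_apply, Equiv.swap_apply_def]
            grind]
          exact hj.comp (Equiv.injective _)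
    rw [hJ, Finset.card_pair hpj.symm]
    decide

/-- simplices with vertex `w` in position `0`, full after relabelling `w` by `a` -/
def starSet {d : ℕ} (ℓ : (Fin d → ℤ) → Fin (d+1)) (w : Fin d → ℤ) (a : Fin (d+1)) :
    Set (Fin (d+1) → Fin d → ℤ) :=
  {v | (IsSimp d v ∧ v 0 = w) ∧ Function.Injective (Function.update (ℓ ∘ v) 0 a)}

lemma starSet_finite {d : ℕ} (ℓ : (Fin d → ℤ) → Fin (d+1)) (w : Fin d → ℤ) (a : Fin (d+1)) :
    (starSet ℓ w a).Finite := (finite_at w).subset fun _ h => h.1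

open Classical in
lemma one_step {d : ℕ} (h1 : (1 : Fin (d+1)) ≠ 0) (ℓ : (Fin d → ℤ) → Fin (d+1))
    (w : Fin d → ℤ) (a b : Fin (d+1)) :
    (((starSet ℓ w a).ncard : ℕ) : ZMod 2) = ((starSet ℓ w b).ncard : ℕ) := by
  by_cases hab : a = b
  · rw [hab]
  set T := (finite_at w).toFinset with hT
  have hmem : ∀ v, v ∈ T ↔ (IsSimp d v ∧ v 0 = w) := fun v => by simp [hT]
  have hc : ∀ a, (((starSet ℓ w a).ncard : ℕ) : ZMod 2) =
      ∑ v ∈ T, if Function.Injective (Function.update (ℓ ∘ v) 0 a) then 1 else 0 := by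
    intro a
    rw [Finset.sum_boole]
    congr 1
    rw [← Set.ncard_coe_finset]
    congr 1
    ext v
    simp [starSet, hmem]
  have hsum : (((starSet ℓ w a).ncard : ℕ) : ZMod 2) + ((starSet ℓ w b).ncard : ℕ) = 0 := by
    rw [hc, hc, ← Finset.sum_add_distrib]
    rw [Finset.sum_congr rfl (fun v _ => (door_count (ℓ ∘ v) 0 a b hab).symm)]
    simp_rw [← Finset.sum_boole]
    rw [← Finset.sum_product']
    rw [← Finset.sum_filter]
    have hfl : ∀ (v : Fin (d+1) → Fin d → ℤ) (j : Fin (d+1)) (a b : Fin (d+1)),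
        Function.update (Function.update (ℓ ∘ flip v j) 0 a) j b =
        Function.update (Function.update (ℓ ∘ v) 0 a) j b := by
      intro v j a b
      funext q
      simp only [Function.update_apply, flip, Function.comp_apply]
      grind
    refine Finset.sum_involution (fun p _ => (flip p.1 p.2, p.2)) ?_ ?_ ?_ ?_
    · intro p _
      decide
    · intro p hp _ he
      simp only [Finset.mem_filter, Finset.mem_product, hmem] at hp
      exact hp.1.1.1.flip_ne h1 p.2 (congrArg Prod.fst he)
    · intro p hp
      simp only [Finset.mem_filter, Finset.mem_product, hmem] at hp ⊢
      refine ⟨⟨⟨hp.1.1.1.flip h1 p.2, ?_⟩, hp.1.2⟩, hp.2.1, ?_⟩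
      · rw [flip, Function.update_of_ne hp.2.1.symm]
        exact hp.1.1.2
      · rw [hfl]; exact hp.2.2
    · intro p hp
      simp only [flip_flip h1]
  generalize (((starSet ℓ w a).ncard : ℕ) : ZMod 2) = s at *
  generalize (((starSet ℓ w b).ncard : ℕ) : ZMod 2) = t at *
  revert s t
  clear hc
  intro s t h
  revert h
  revert s t
  decide

/-- full simplices, rotated so that the vertex labelled `0` comes first -/
def fullSet {d : ℕ} (ℓ : (Fin d → ℤ) → Fin (d+1)) : Set (Fin (d+1) → Fin d → ℤ) :=
  {v | IsSimp d v ∧ Function.Injective (ℓ ∘ v) ∧ ℓ (v 0) = 0}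

lemma fullSet_star {d : ℕ} (ℓ : (Fin d → ℤ) → Fin (d+1)) (w : Fin d → ℤ) :
    ∃ g : (Fin (d+1) → Fin d → ℤ) → (Fin (d+1) → Fin d → ℤ),
      Set.BijOn g (starSet ℓ w (ℓ w)) (fullSet ℓ ∩ {v | w ∈ Set.range v}) := by
  have hst : ∀ v ∈ starSet ℓ w (ℓ w), IsSimp d v ∧ v 0 = w ∧ Function.Injective (ℓ ∘ v) := by
    rintro v ⟨⟨h1, h2⟩, h3⟩
    refine ⟨h1, h2, ?_⟩
    rwa [← h2, show ℓ (v 0) = (ℓ ∘ v) 0 from rfl, Function.update_eq_self] at h3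
  have : ∀ v : Fin (d+1) → Fin d → ℤ, ∃ k : Fin (d+1), v ∈ starSet ℓ w (ℓ w) → ℓ (v k) = 0 := by
    intro v
    by_cases hv : v ∈ starSet ℓ w (ℓ w)
    · obtain ⟨k, hk⟩ := (Finite.injective_iff_surjective.1 (hst v hv).2.2) 0
      exact ⟨k, fun _ => hk⟩
    · exact ⟨0, fun h => absurd h hv⟩
  choose K hK using this
  refine ⟨fun v k => v (k + K v), ?_, ?_, ?_⟩
  · intro v hv
    obtain ⟨s1, s2, s3⟩ := hst v hv
    refine ⟨⟨s1.rot _, ?_, ?_⟩, ⟨-K v, ?_⟩⟩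
    · exact s3.comp (add_left_injective (K v))
    · simpa using hK v hv
    · simpa using s2
  · intro v hv v' hv' he
    obtain ⟨s1, s2, s3⟩ := hst v hv
    obtain ⟨t1, t2, t3⟩ := hst v' hv'
    have he' : ∀ k, v (k + K v) = v' (k + K v') := fun k => congrFun he k
    have hk : K v = K v' := by
      have := he' (-K v)
      rw [neg_add_cancel, s2, ← t2] at this
      have := t1.inj this
      rw [eq_comm, neg_add_eq_zero] at this
      exact this
    funext k
    have := he' (k - K v)
    rw [← hk] at this
    simpa using this
  · rintro u ⟨⟨u1, u2, u3⟩, m, hm⟩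
    have hin : (fun k => u (k + m)) ∈ starSet ℓ w (ℓ w) := by
      refine ⟨⟨u1.rot m, by simpa using hm⟩, ?_⟩
      rw [show ℓ w = (ℓ ∘ (fun k => u (k + m))) 0 by simp [hm], Function.update_eq_self]
      exact u2.comp (add_left_injective m)
    refine ⟨_, hin, ?_⟩
    have h0 := hK _ hin
    have : K (fun k => u (k + m)) + m = 0 := by
      apply u2
      simp only [Function.comp_apply]
      rw [h0, u3]
    funext k
    simp only
    rw [add_assoc, this, add_zero]

lemma odd_update {d : ℕ} (h1 : (1 : Fin (d+1)) ≠ 0) (ℓ : (Fin d → ℤ) → Fin (d+1))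
    (w : Fin d → ℤ) (b : Fin (d+1)) (h : (fullSet ℓ).Finite ∧ Odd (fullSet ℓ).ncard) :
    (fullSet (Function.update ℓ w b)).Finite ∧ Odd (fullSet (Function.update ℓ w b)).ncard := by
  set ℓ' := Function.update ℓ w b with hℓ'
  set R : Set (Fin (d+1) → Fin d → ℤ) := {v | w ∈ Set.range v} with hR
  have key : ∀ ℓ : (Fin d → ℤ) → Fin (d+1), (fullSet ℓ ∩ R).Finite ∧
      (fullSet ℓ ∩ R).ncard = (starSet ℓ w (ℓ w)).ncard := by
    intro ℓ
    obtain ⟨g, hg⟩ := fullSet_star ℓ w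
    refine ⟨?_, ?_⟩
    · rw [← hg.image_eq]; exact (starSet_finite _ _ _).image g
    · rw [← hg.image_eq]; exact hg.injOn.ncard_image
  have hdiff : fullSet ℓ' \ R = fullSet ℓ \ R := by
    ext v
    simp only [Set.mem_sdiff, hR, Set.mem_ofPred_eq]
    refine and_congr_left fun hv => ?_
    have : ∀ k, ℓ' (v k) = ℓ (v k) := fun k =>
      Function.update_of_ne (fun h => hv ⟨k, h⟩) _ _
    have h2 : ℓ' ∘ v = ℓ ∘ v := funext this
    simp only [fullSet, Set.mem_ofPred_eq, h2, this]
  have hstar : starSet ℓ' w (ℓ' w) = starSet ℓ w b := by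
    ext v
    simp only [starSet, Set.mem_ofPred_eq]
    refine and_congr_right fun hv => ?_
    have : Function.update (ℓ' ∘ v) 0 (ℓ' w) = Function.update (ℓ ∘ v) 0 b := by
      funext k
      by_cases hk : k = 0
      · subst hk; simp [hℓ']
      · rw [Function.update_of_ne hk, Function.update_of_ne hk]
        have : v k ≠ w := fun h => hk (hv.1.inj (h.trans hv.2.symm))
        simp [hℓ', this]
    rw [this]
  have hfd : (fullSet ℓ' \ R).Finite := by rw [hdiff]; exact h.1.sdiff
  have hf : (fullSet ℓ').Finite := by
    rw [← Set.inter_union_sdiff (fullSet ℓ') R]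
    exact (key ℓ').1.union hfd
  refine ⟨hf, ?_⟩
  have c1 := Set.ncard_inter_add_ncard_sdiff_eq_ncard (fullSet ℓ) R h.1
  have c2 := Set.ncard_inter_add_ncard_sdiff_eq_ncard (fullSet ℓ') R hf
  rw [(key _).2] at c1 c2
  rw [hdiff, hstar] at c2
  have := one_step h1 ℓ w (ℓ w) b
  rw [← ZMod.natCast_eq_one_iff_odd] at *
  rw [← c2]
  push_cast
  rw [← this]
  rw [← h.2, ← c1]
  push_cast
  rfl

open Classical in
/-- the least index satisfying `P`, or `d` -/
noncomputable def lab {d : ℕ} (P : Fin d → Prop) : Fin (d+1) :=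
  (insert (Fin.last d) ((Finset.univ.filter P).map Fin.castSuccEmb)).min'
    (Finset.insert_nonempty _ _)

lemma lab_le {d : ℕ} {P : Fin d → Prop} {i : Fin d} (h : P i) : lab P ≤ i.castSucc := by
  classical
  unfold lab
  apply Finset.min'_le
  simp [h]

lemma lab_spec {d : ℕ} {P : Fin d → Prop} {i : Fin d} (h : lab P = i.castSucc) : P i := by
  classical
  have h2 := Finset.min'_mem (insert (Fin.last d) ((Finset.univ.filter P).map Fin.castSuccEmb))
    (Finset.insert_nonempty _ _)
  change lab P ∈ _ at h2
  rw [h] at h2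
  have : i.castSucc ≠ Fin.last d := (Fin.castSucc_lt_last i).ne
  simpa [this] using h2

lemma lab_eq {d : ℕ} {P : Fin d → Prop} {k : Fin (d+1)}
    (h : ∀ i : Fin d, P i ↔ k ≤ i.castSucc) : lab P = k := by
  apply le_antisymm
  · by_cases hk : k = Fin.last d
    · rw [hk]; exact Fin.le_last _
    · obtain ⟨j, rfl⟩ := Fin.exists_castSucc_eq.2 hk
      exact lab_le ((h j).2 le_rfl)
  · by_cases hk : lab P = Fin.last d
    · rw [hk]; exact Fin.le_last _
    · obtain ⟨j, hj⟩ := Fin.exists_castSucc_eq.2 hk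
      rw [← hj]
      exact (h j).1 (lab_spec hj.symm)

lemma lab_mono {d : ℕ} {P Q : Fin d → Prop} (h : ∀ i, Q i → P i) : lab P ≤ lab Q := by
  by_cases hk : lab Q = Fin.last d
  · rw [hk]; exact Fin.le_last _
  · obtain ⟨j, hj⟩ := Fin.exists_castSucc_eq.2 hk
    rw [← hj]
    exact lab_le (h j (lab_spec hj.symm))

/-- canonical labelling -/
noncomputable def canon {d : ℕ} (x : Fin d → ℤ) : Fin (d+1) := lab (fun i => x i ≤ 0)

/-- the canonical full simplex -/
def std (d : ℕ) : Fin (d+1) → Fin d → ℤ := fun k j => if j.castSucc < k then 1 else 0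

lemma last_add_one (d : ℕ) : Fin.last d + 1 = 0 := by simp

lemma std_mem (d : ℕ) : std d ∈ fullSet (canon (d := d)) := by
  have hc : ∀ k, canon (std d k) = k := by
    intro k
    apply lab_eq
    intro i
    unfold std
    split_ifs with h
    · simp [h]
    · simpa using h
  refine ⟨⟨Equiv.refl _, ?_⟩, ?_, ?_⟩
  · intro k
    funext j
    by_cases hk : k = Fin.last d
    · subst hk
      rw [last_add_one]
      simp [std, stp, Fin.castSucc_lt_last]
    · obtain ⟨i, rfl⟩ := Fin.exists_castSucc_eq.2 hk
      rw [Fin.coeSucc_eq_succ]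
      simp only [std, stp, Pi.add_apply, Equiv.refl_apply, hk, if_false]
      simp only [Fin.lt_def, Fin.ext_iff, Fin.val_castSucc, Fin.val_succ]
      split_ifs <;> omega
  · intro k k' h
    simpa [hc] using h
  · exact hc 0

lemma canon_full (d : ℕ) : fullSet (canon (d := d)) = {std d} := by
  apply Set.eq_singleton_iff_unique_mem.2
  refine ⟨std_mem d, ?_⟩
  rintro v ⟨⟨σ, hσ⟩, hinj, h0⟩
  have hstep : ∀ k, σ k ≠ Fin.last d → canon (v k) < canon (v (k+1)) := by
    intro k hk
    have hne : k + 1 ≠ k := by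
      intro h
      have h3 := hσ k
      rw [h] at h3
      obtain ⟨j, hj⟩ := Fin.exists_castSucc_eq.2 hk
      have h4 := congrFun h3 j
      simp [stp, ← hj] at h4
    apply lt_of_le_of_ne
    · apply lab_mono
      intro i hi
      rw [hσ k] at hi
      simp only [Pi.add_apply, stp, hk, if_false] at hi
      split_ifs at hi <;> omega
    · intro h
      exact hne (hinj h).symm
  have hlast : σ (Fin.last d) = Fin.last d := by
    by_contra h
    have := hstep _ h
    rw [last_add_one, h0] at this
    exact absurd this (Fin.not_lt_zero _)
  have hne : ∀ i : Fin d, σ i.castSucc ≠ Fin.last d := by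
    intro i h
    rw [← hlast] at h
    exact (Fin.castSucc_lt_last i).ne (σ.injective h)
  have hsm : StrictMono (fun k => canon (v k)) := by
    rw [Fin.strictMono_iff_lt_succ]
    intro i
    have := hstep _ (hne i)
    rwa [Fin.coeSucc_eq_succ] at this
  have hid : ∀ k, canon (v k) = k := by
    intro k
    have := (hsm.range_inj (strictMono_id (α := Fin (d+1)))).1 (by
      rw [(Finite.injective_iff_surjective.1 hinj :
        Function.Surjective (fun k => canon (v k))).range_eq]
      simp)
    exact congrFun this k
  have hle : ∀ i : Fin d, v i.castSucc i ≤ 0 := fun i => lab_spec (hid i.castSucc)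
  have hgt : ∀ (i : Fin d) (k : Fin (d+1)), i.castSucc < k → 0 < v k i := by
    intro i k hik
    by_contra h
    have := lab_le (P := fun i => v k i ≤ 0) (i := i) (not_lt.1 h)
    change canon (v k) ≤ _ at this
    rw [hid] at this
    exact absurd this (not_le.2 hik)
  have hsig : ∀ i : Fin d, σ i.castSucc = i.castSucc := by
    intro i
    by_contra h
    have h2 := congrFun (hσ i.castSucc) i
    rw [Fin.coeSucc_eq_succ] at h2
    simp only [Pi.add_apply, stp, hne i, h, if_false] at h2
    have := hle i
    have := hgt i i.succ Fin.castSucc_lt_succ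
    omega
  have hsucc : ∀ i : Fin d, v i.succ = v i.castSucc + stp d i.castSucc := by
    intro i
    have := hσ i.castSucc
    rwa [Fin.coeSucc_eq_succ, hsig] at this
  have hform : ∀ k : Fin (d+1), ∀ j, v k j = v 0 j + std d k j := by
    intro k
    induction k using Fin.induction with
    | zero => intro j; simp [std]
    | succ i ih =>
      intro j
      rw [hsucc, Pi.add_apply, ih]
      have : i.castSucc ≠ Fin.last d := (Fin.castSucc_lt_last i).ne
      simp only [std, stp, this, if_false]
      simp only [Fin.lt_def, Fin.ext_iff, Fin.val_castSucc, Fin.val_succ]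
      split_ifs <;> omega
  have hz : ∀ j, v 0 j = 0 := by
    intro j
    have h3 := hle j
    have h4 := hgt j j.succ Fin.castSucc_lt_succ
    rw [hform] at h3 h4
    simp [std] at h3 h4
    omega
  funext k j
  rw [hform, hz, zero_add]

/-- Sperner type lemma -/
lemma sperner {d : ℕ} (h1 : (1 : Fin (d+1)) ≠ 0) (ℓ : (Fin d → ℤ) → Fin (d+1))
    (T : Finset (Fin d → ℤ)) (hT : ∀ x, x ∉ T → ℓ x = canon x) :
    ∃ v, IsSimp d v ∧ Function.Surjective (ℓ ∘ v) := by
  classical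
  have : ∀ T : Finset (Fin d → ℤ), (fullSet (T.piecewise ℓ canon)).Finite ∧
      Odd (fullSet (T.piecewise ℓ canon)).ncard := by
    intro T
    induction T using Finset.induction with
    | empty =>
      rw [Finset.piecewise_empty, canon_full]
      simp
    | insert a s ha ih =>
      rw [Finset.piecewise_insert]
      exact odd_update h1 _ _ _ ih
  have h := this T
  rw [show T.piecewise ℓ canon = ℓ by
    funext x
    by_cases hx : x ∈ T
    · simp [hx]
    · simp [hx, hT x hx]] at h
  have hne : (fullSet ℓ).Nonempty := by
    apply Set.nonempty_of_ncard_ne_zero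
    intro h0
    rw [h0] at h
    simp at h
  obtain ⟨v, hv⟩ := hne
  exact ⟨v, hv.1, Finite.injective_iff_surjective.1 hv.2.1⟩

lemma IsSimp.close {d : ℕ} {v : Fin (d+1) → Fin d → ℤ} (h : IsSimp d v) (k k' : Fin (d+1))
    (j : Fin d) : |v k j - v k' j| ≤ 2 * (d + 1) := by
  obtain ⟨σ, hσ⟩ := h
  have hb : ∀ k : Fin (d+1), |v k j - v 0 j| ≤ (k : ℕ) := by
    intro k
    induction k using Fin.induction with
    | zero => simp
    | succ i ih =>
      have := hσ i.castSucc
      rw [Fin.coeSucc_eq_succ] at this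
      rw [this]
      have h2 : |stp d (σ i.castSucc) j| ≤ 1 := by
        unfold stp; split_ifs <;> simp
      simp only [Pi.add_apply, Fin.val_succ, Fin.val_castSucc, abs_le] at *
      push_cast
      omega
  have a := hb k
  have b := hb k'
  have c := k.2
  have e := k'.2
  rw [abs_le] at *
  omega

lemma approx_zero {d : ℕ} (h1 : (1 : Fin (d+1)) ≠ 0) (H : (Fin d → ℝ) → (Fin d → ℝ))
    (hH : UniformContinuous H) (R : ℝ) (hR : ∀ x, R ≤ ‖x‖ → H x = x) (ε : ℝ) (hε : 0 < ε) :
    ∃ u, ‖H u‖ < ε := by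
  obtain ⟨δ, hδ, hHδ⟩ := Metric.uniformContinuous_iff.1 hH ε hε
  set h : ℝ := δ / (2 * (2 * (d + 1))) with hh
  have hpos : 0 < h := by positivity
  set s : (Fin d → ℤ) → (Fin d → ℝ) := fun x i => h * (x i : ℝ) with hs
  set ℓ : (Fin d → ℤ) → Fin (d+1) := fun x => lab (fun i => H (s x) i ≤ 0) with hℓ
  set N : ℤ := ⌈R / h⌉ with hN
  have hT : ∀ x, x ∉ Finset.Icc (fun _ : Fin d => -N) (fun _ : Fin d => N) → ℓ x = canon x := by
    intro x hx
    have : ∃ i, N < |x i| := by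
      by_contra hcon
      push Not at hcon
      apply hx
      rw [Finset.mem_Icc]
      exact ⟨fun i => (abs_le.1 (hcon i)).1, fun i => (abs_le.1 (hcon i)).2⟩
    obtain ⟨i, hi⟩ := this
    have hbig : R ≤ ‖s x‖ := by
      refine le_trans ?_ (norm_le_pi_norm (s x) i)
      have h3 : R / h ≤ N := Int.le_ceil _
      have h4 : (N : ℝ) ≤ |(x i : ℝ)| := by exact_mod_cast hi.le
      rw [hs, Real.norm_eq_abs, abs_mul, abs_of_pos hpos]
      rw [div_le_iff₀ hpos] at h3
      nlinarith
    simp only [hℓ, canon, hR _ hbig]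
    congr 1
    funext j
    simp only [hs, eq_iff_iff]
    constructor
    · intro h5
      by_contra h6
      push Not at h6
      have : (0:ℝ) < x j := by exact_mod_cast h6
      have := mul_pos hpos this
      linarith
    · intro h5
      have : (x j : ℝ) ≤ 0 := by exact_mod_cast h5
      exact mul_nonpos_of_nonneg_of_nonpos hpos.le this
  obtain ⟨v, hv, hsurj⟩ := sperner h1 ℓ _ hT
  obtain ⟨k, hk⟩ := hsurj (Fin.last d)
  refine ⟨s (v k), ?_⟩
  rw [pi_norm_lt_iff hε]
  intro i
  have hp : 0 < H (s (v k)) i := by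
    by_contra hcon
    have := lab_le (P := fun i => H (s (v k)) i ≤ 0) (not_lt.1 hcon)
    change (ℓ ∘ v) k ≤ _ at this
    rw [hk] at this
    exact absurd this (not_le.2 (Fin.castSucc_lt_last i))
  obtain ⟨k', hk'⟩ := hsurj i.castSucc
  have hn : H (s (v k')) i ≤ 0 := lab_spec (P := fun i => H (s (v k')) i ≤ 0) hk'
  have hd : dist (s (v k)) (s (v k')) < δ := by
    rw [dist_pi_lt_iff hδ]
    intro j
    have h3 : |(v k j : ℝ) - v k' j| ≤ 2 * (d + 1) := by exact_mod_cast hv.close k k' j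
    rw [Real.dist_eq]
    simp only [hs]
    rw [← mul_sub, abs_mul, abs_of_pos hpos]
    calc h * |(v k j : ℝ) - v k' j| ≤ h * (2 * (d + 1)) := by gcongr
      _ = δ / 2 := by rw [hh]; field_simp
      _ < δ := by linarith
  have h4 := (dist_pi_lt_iff hε).1 (hHδ hd) i
  rw [Real.dist_eq, abs_lt] at h4
  rw [Real.norm_eq_abs, abs_lt]
  constructor <;> linarith

lemma exists_zero {d : ℕ} (h1 : (1 : Fin (d+1)) ≠ 0) (H : (Fin d → ℝ) → (Fin d → ℝ))
    (hH : Continuous H) (R : ℝ) (hR : ∀ x, R ≤ ‖x‖ → H x = x) : ∃ z, H z = 0 := by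
  have hu : UniformContinuous H := by
    have hc : Continuous (fun x => H x - x) := hH.sub continuous_id
    have hs : HasCompactSupport (fun x => H x - x) := by
      apply HasCompactSupport.intro (isCompact_closedBall (0 : Fin d → ℝ) R)
      intro x hx
      rw [Metric.mem_closedBall, dist_zero_right, not_le] at hx
      rw [hR x hx.le, sub_self]
    have := (hs.uniformContinuous_of_continuous hc).add uniformContinuous_id
    simpa using this
  have hne : (Metric.closedBall (0 : Fin d → ℝ) (max R 1)).Nonempty :=
    ⟨0, by simp⟩
  obtain ⟨z, hz, hmin⟩ := (isCompact_closedBall (0 : Fin d → ℝ) (max R 1)).exists_isMinOn hne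
    hH.norm.continuousOn
  refine ⟨z, ?_⟩
  by_contra hcon
  have hpos : 0 < ‖H z‖ := norm_pos_iff.2 hcon
  obtain ⟨u, hu⟩ := approx_zero h1 H hu R hR (min ‖H z‖ 1) (lt_min hpos one_pos)
  have hub : u ∈ Metric.closedBall (0 : Fin d → ℝ) (max R 1) := by
    rw [Metric.mem_closedBall, dist_zero_right]
    by_contra h
    rw [not_le] at h
    have h2 := hR u ((le_max_left _ _).trans h.le)
    rw [h2] at hu
    have := hu.trans_le (min_le_right _ _)
    have := (le_max_right R 1).trans_lt h
    linarith
  have h3 : ‖H z‖ ≤ ‖H u‖ := hmin hub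
  have := hu.trans_le (min_le_left _ _)
  linarith

/-- Brouwer: a bounded continuous self-map of `ℝ^d` has a fixed point. -/
lemma brouwer {d : ℕ} (h1 : (1 : Fin (d+1)) ≠ 0) (g : (Fin d → ℝ) → (Fin d → ℝ))
    (hg : Continuous g) (R : ℝ) (hR : ∀ x, ‖g x‖ ≤ R) : ∃ z, g z = z := by
  obtain ⟨z, hz⟩ := exists_zero h1 (fun x => x - (max 0 (min 1 (R + 1 - ‖x‖))) • g x)
    (by fun_prop) (R + 1) (by
      intro x hx
      have : max 0 (min 1 (R + 1 - ‖x‖)) = 0 := by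
        apply max_eq_left
        exact (min_le_right _ _).trans (by linarith)
      simp only [this, zero_smul, sub_zero])
  refine ⟨z, ?_⟩
  have hz' : z = (max 0 (min 1 (R + 1 - ‖z‖))) • g z := sub_eq_zero.1 hz
  have hn : ‖z‖ ≤ R := by
    rw [hz', norm_smul, Real.norm_eq_abs, abs_of_nonneg (le_max_left _ _)]
    have h2 : max 0 (min 1 (R + 1 - ‖z‖)) ≤ 1 := max_le zero_le_one (min_le_left _ _)
    calc _ ≤ 1 * ‖g z‖ := by gcongr
      _ ≤ R := by rw [one_mul]; exact hR z
  have h3 : max 0 (min 1 (R + 1 - ‖z‖)) = 1 := by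
    rw [min_eq_left (by linarith)]
    simp
  rw [h3, one_smul] at hz'
  exact hz'.symm

lemma argmin_continuous {E : Type*} [TopologicalSpace E] (K : Set ℝ) (hK : IsCompact K)
    (Φ : E × ℝ → ℝ) (hΦ : Continuous Φ) (g : E → ℝ) (hgK : ∀ y, g y ∈ K)
    (hmin : ∀ y, ∀ t ∈ K, Φ (y, g y) ≤ Φ (y, t))
    (huniq : ∀ y, ∀ t ∈ K, (∀ s ∈ K, Φ (y, t) ≤ Φ (y, s)) → t = g y) : Continuous g := by
  have : CompactSpace K := isCompact_iff_compactSpace.1 hK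
  suffices h : Continuous (fun y => (⟨g y, hgK y⟩ : K)) from continuous_subtype_val.comp h
  have : {p : E × K | p.2 = ⟨g p.1, hgK p.1⟩} =
      ⋂ s : K, {p : E × K | Φ (p.1, p.2) ≤ Φ (p.1, s)} := by
    ext p
    simp only [Set.mem_ofPred_eq, Set.mem_iInter]
    constructor
    · intro h s
      rw [h]
      exact hmin _ _ s.2
    · intro h
      exact Subtype.ext (huniq p.1 p.2 p.2.2 fun s hs => h ⟨s, hs⟩)
  have hcl : IsClosed {p : E × K | p.2 = ⟨g p.1, hgK p.1⟩} := by
    rw [this]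
    exact isClosed_iInter fun s => isClosed_le (hΦ.comp (by fun_prop)) (hΦ.comp (by fun_prop))
  rw [continuous_iff_isClosed]
  intro C hC
  have h2 := isClosedMap_fst_of_compactSpace _ (hcl.inter (hC.preimage continuous_snd))
  convert h2 using 1
  ext y
  constructor
  · intro hy
    exact ⟨(y, ⟨g y, hgK y⟩), ⟨rfl, hy⟩, rfl⟩
  · rintro ⟨p, ⟨hp1, hp2⟩, rfl⟩
    have hp1' : p.2 = ⟨g p.1, hgK p.1⟩ := hp1
    have hp2' : p.2 ∈ C := hp2
    rw [hp1'] at hp2'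
    exact hp2'

/-- Existence of Nash equilibria for one-dimensional strategy sets. -/
lemma nash_exists {d : ℕ} (h1 : (1 : Fin (d+1)) ≠ 0) (K : Fin d → Set ℝ)
    (hKne : ∀ i, (K i).Nonempty) (hKc : ∀ i, IsCompact (K i)) (hKv : ∀ i, Convex ℝ (K i))
    (φ : Fin d → (Fin d → ℝ) → ℝ) (hφ : ∀ i, Continuous (φ i))
    (hφv : ∀ i y, ConvexOn ℝ Set.univ fun t : ℝ => φ i (Function.update y i t)) :
    ∃ y : Fin d → ℝ, ∀ i, y i ∈ K i ∧ ∀ t ∈ K i, φ i y ≤ φ i (Function.update y i t) := by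
  set Φ : Fin d → (Fin d → ℝ) × ℝ → ℝ :=
    fun i p => φ i (Function.update p.1 i p.2) + (p.2 - p.1 i)^2 with hΦ
  have hΦc : ∀ i, Continuous (Φ i) := by
    intro i
    have : Continuous fun p : (Fin d → ℝ) × ℝ => Function.update p.1 i p.2 :=
      continuous_fst.update i continuous_snd
    have := (hφ i).comp this
    simp only [hΦ]
    exact this.add (by fun_prop)
  have hex : ∀ i y, ∃ t ∈ K i, ∀ s ∈ K i, Φ i (y, t) ≤ Φ i (y, s) := by
    intro i y
    have hc : Continuous fun t => Φ i (y, t) := (hΦc i).comp (by fun_prop)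
    exact (hKc i).exists_isMinOn (hKne i) hc.continuousOn
  choose g hgK hgmin using hex
  have huniq : ∀ i y, ∀ t ∈ K i, (∀ s ∈ K i, Φ i (y, t) ≤ Φ i (y, s)) → t = g i y := by
    intro i y t ht hmin
    by_contra hne
    have hm : (1/2 : ℝ) • t + (1/2 : ℝ) • g i y ∈ K i :=
      hKv i ht (hgK i y) (by norm_num) (by norm_num) (by norm_num)
    have a1 := hmin _ hm
    have a2 := hgmin i y _ hm
    have a3 := (hφv i y).2 (Set.mem_univ t) (Set.mem_univ (g i y))
      (show (0:ℝ) ≤ 1/2 by norm_num) (show (0:ℝ) ≤ 1/2 by norm_num) (by norm_num)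
    simp only [hΦ, smul_eq_mul] at a1 a2 a3
    have : 0 < (t - g i y)^2 := by
      have : t - g i y ≠ 0 := sub_ne_zero.2 hne
      positivity
    nlinarith
  have hgc : ∀ i, Continuous (g i) := fun i =>
    argmin_continuous (K i) (hKc i) (Φ i) (hΦc i) (g i) (hgK i) (hgmin i) (huniq i)
  obtain ⟨R, hR⟩ := (isCompact_univ_pi hKc).isBounded.exists_norm_le
  obtain ⟨y, hy⟩ := brouwer h1 (fun y i => g i y) (continuous_pi hgc) R
    (fun y => hR _ (fun i _ => hgK i y))
  have hy' : ∀ i, g i y = y i := fun i => congrFun hy i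
  refine ⟨y, fun i => ⟨hy' i ▸ hgK i y, fun t ht => ?_⟩⟩
  have hyK : y i ∈ K i := hy' i ▸ hgK i y
  apply le_of_forall_pos_le_add
  intro ε hε
  have key : ∀ s : ℝ, 0 < s → s ≤ 1 →
      φ i y ≤ φ i (Function.update y i t) + s * (t - y i)^2 := by
    intro s hs hs1
    have hm : (1 - s) • y i + s • t ∈ K i := hKv i hyK ht (by linarith) hs.le (by ring)
    have a2 := hgmin i y _ hm
    have a3 := (hφv i y).2 (Set.mem_univ (y i)) (Set.mem_univ t)
      (show (0:ℝ) ≤ 1 - s by linarith) hs.le (by ring)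
    rw [hy'] at a2
    simp only [hΦ, smul_eq_mul, Function.update_eq_self] at a2 a3
    have : s * φ i y ≤ s * (φ i (Function.update y i t) + s * (t - y i)^2) := by nlinarith
    exact le_of_mul_le_mul_left this hs
  have hp : 0 < (t - y i)^2 + 1 := by positivity
  have h4 := key (min 1 (ε / ((t - y i)^2 + 1))) (lt_min one_pos (by positivity)) (min_le_left _ _)
  refine h4.trans ?_
  gcongr
  calc min 1 (ε / ((t - y i)^2 + 1)) * (t - y i)^2
      ≤ (ε / ((t - y i)^2 + 1)) * ((t - y i)^2 + 1) := by
        apply mul_le_mul (min_le_right _ _) (by linarith) (by positivity) (by positivity)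
    _ = ε := by field_simp

end KuhnSperner

/-- The paper's Theorem 2: existence of an equilibrium of the single-leader-multiple-follower game with reformulated DDCCs. -/
theorem stmt_14
    (m I : ℕ) (hm : 1 ≤ m) (hI : 1 ≤ I)
    (X : Set (Fin m → ℝ)) (hXne : X.Nonempty) (hXc : IsCompact X)
    (f : (Fin m → ℝ) → (Fin I → ℝ) → ℝ)
    (hf : Continuous fun p : (Fin m → ℝ) × (Fin I → ℝ) => f p.1 p.2)
    (Y : Fin I → Set ℝ)
    (hYne : ∀ i, (Y i).Nonempty) (hYc : ∀ i, IsCompact (Y i))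
    (hYconv : ∀ i, Convex ℝ (Y i)) (hY0 : ∀ i, (0 : ℝ) ∈ Y i)
    (b l Sig : Fin I → ℝ)
    (hb : ∀ i, 0 < b i) (hl : ∀ i, 0 ≤ l i) (hSig : ∀ i, 0 ≤ Sig i)
    (μ : Fin I → (Fin m → ℝ) → ℝ) (hμ : ∀ i, Continuous (μ i))
    (S : Fin I → (Fin m → ℝ) → Set ℝ)
    (hS : ∀ i x, S i x = {y ∈ Y i | μ i x * y + l i * Real.sqrt (Sig i) * |y| ≤ b i})
    (φ : Fin I → (Fin m → ℝ) → (Fin I → ℝ) → ℝ)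
    (hφc : ∀ i, Continuous fun p : (Fin m → ℝ) × (Fin I → ℝ) => φ i p.1 p.2)
    (hφconv : ∀ i x y, ConvexOn ℝ Set.univ fun t : ℝ => φ i x (Function.update y i t))
    (Nash : (Fin m → ℝ) → Set (Fin I → ℝ))
    (hNash : ∀ x, Nash x = {y : Fin I → ℝ | ∀ i, y i ∈ S i x ∧
      ∀ t ∈ S i x, φ i x y ≤ φ i x (Function.update y i t)})
    : ∃ xstar ∈ X, ∃ ystar ∈ Nash xstar,
      ∀ x ∈ X, ∀ y ∈ Nash x, f x y ≤ f xstar ystar := by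
  have h1 : (1 : Fin (I+1)) ≠ 0 := by
    obtain ⟨n, rfl⟩ : ∃ n, I = n + 1 := ⟨I - 1, by omega⟩
    exact one_ne_zero
  have hmemS : ∀ i x t, t ∈ S i x ↔ t ∈ Y i ∧ μ i x * t + l i * Real.sqrt (Sig i) * |t| ≤ b i := by
    intro i x t
    rw [hS]
    rfl
  have hmemN : ∀ x y, y ∈ Nash x ↔ ∀ i, y i ∈ S i x ∧
      ∀ t ∈ S i x, φ i x y ≤ φ i x (Function.update y i t) := by
    intro x y
    rw [hNash]
    rfl
  -- nonemptiness of the lower-level equilibrium set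
  have hne : ∀ x, (Nash x).Nonempty := by
    intro x
    suffices h : ∃ y : Fin I → ℝ, ∀ i, y i ∈ S i x ∧
        ∀ t ∈ S i x, φ i x y ≤ φ i x (Function.update y i t) by
      obtain ⟨y, hy⟩ := h
      exact ⟨y, (hmemN x y).2 hy⟩
    refine KuhnSperner.nash_exists h1 (fun i => S i x) ?_ ?_ ?_ (fun i => φ i x) ?_
      (fun i y => hφconv i x y)
    · intro i
      exact ⟨0, (hmemS i x 0).2 ⟨hY0 i, by simpa using (hb i).le⟩⟩
    · intro i
      rw [hS]
      have hcl : IsClosed {y : ℝ | μ i x * y + l i * Real.sqrt (Sig i) * |y| ≤ b i} :=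
        isClosed_le (by fun_prop) continuous_const
      exact (hYc i).inter_right hcl
    · intro i t ht s hs p q hp hq hpq
      rw [hmemS] at ht hs ⊢
      refine ⟨hYconv i ht.1 hs.1 hp hq hpq, ?_⟩
      have hc : 0 ≤ l i * Real.sqrt (Sig i) := mul_nonneg (hl i) (Real.sqrt_nonneg _)
      have habs : |p • t + q • s| ≤ p * |t| + q * |s| := by
        refine (abs_add_le _ _).trans (le_of_eq ?_)
        simp only [smul_eq_mul, abs_mul, abs_of_nonneg hp, abs_of_nonneg hq]
      have h3 := mul_le_mul_of_nonneg_left habs hc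
      have h4 := mul_le_mul_of_nonneg_left ht.2 hp
      have h5 := mul_le_mul_of_nonneg_left hs.2 hq
      have h6 : b i = p * b i + q * b i := by rw [← add_mul, hpq, one_mul]
      simp only [smul_eq_mul] at *
      nlinarith
    · intro i
      exact (hφc i).comp (by fun_prop : Continuous fun y : Fin I → ℝ => (x, y))
  -- the graph
  set G : Set ((Fin m → ℝ) × (Fin I → ℝ)) := {p | p.1 ∈ X ∧ p.2 ∈ Nash p.1} with hG
  have hGsub : G ⊆ X ×ˢ Set.univ.pi Y := by
    rintro p ⟨h2, h3⟩
    exact ⟨h2, fun i _ => ((hmemS _ _ _).1 ((hmemN _ _).1 h3 i).1).1⟩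
  have hcomp : IsCompact (X ×ˢ Set.univ.pi Y) := hXc.prod (isCompact_univ_pi hYc)
  have hGclosed : IsClosed G := by
    rw [← isSeqClosed_iff_isClosed]
    intro u p hu hlim
    have hp := hcomp.isClosed.isSeqClosed (fun n => hGsub (hu n)) hlim
    refine ⟨hp.1, (hmemN _ _).2 fun i => ⟨(hmemS _ _ _).2 ⟨hp.2 i trivial, ?_⟩, ?_⟩⟩
    · have hc : Continuous fun p : (Fin m → ℝ) × (Fin I → ℝ) =>
          μ i p.1 * p.2 i + l i * Real.sqrt (Sig i) * |p.2 i| := by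
        have := hμ i
        fun_prop
      refine le_of_tendsto ((hc.tendsto p).comp hlim) (Filter.Eventually.of_forall fun n => ?_)
      exact ((hmemS _ _ _).1 ((hmemN _ _).1 (hu n).2 i).1).2
    · intro t ht
      rw [hmemS] at ht
      have key : ∀ c : ℝ, 0 ≤ c → c < 1 → φ i p.1 p.2 ≤ φ i p.1 (Function.update p.2 i (c * t)) := by
        intro c hc0 hc1
        have hcY : c * t ∈ Y i := by
          have := hYconv i ht.1 (hY0 i) hc0 (show 0 ≤ 1 - c by linarith) (by ring)
          simpa using this
        have hlt : μ i p.1 * (c * t) + l i * Real.sqrt (Sig i) * |c * t| < b i := by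
          rw [abs_mul, abs_of_nonneg hc0]
          have := hb i
          nlinarith [mul_le_mul_of_nonneg_left ht.2 hc0]
        have hcont : Continuous fun p : (Fin m → ℝ) × (Fin I → ℝ) =>
            μ i p.1 * (c * t) + l i * Real.sqrt (Sig i) * |c * t| := by
          have := hμ i
          fun_prop
        have hev := ((hcont.tendsto p).comp hlim).eventually_lt_const hlt
        have hc2 : Continuous fun p : (Fin m → ℝ) × (Fin I → ℝ) =>
            φ i p.1 (Function.update p.2 i (c * t)) :=
          (hφc i).comp (continuous_fst.prodMk (continuous_snd.update i continuous_const))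
        refine le_of_tendsto_of_tendsto (((hφc i).tendsto p).comp hlim)
          ((hc2.tendsto p).comp hlim) ?_
        filter_upwards [hev] with n hn
        exact ((hmemN _ _).1 (hu n).2 i).2 _ ((hmemS _ _ _).2 ⟨hcY, le_of_lt hn⟩)
      have hc3 : Continuous fun c : ℝ => φ i p.1 (Function.update p.2 i (c * t)) :=
        (hφc i).comp (continuous_const.prodMk
          (continuous_const.update i (continuous_id.mul continuous_const)))
      have hl3 := (hc3.tendsto 1).mono_left (nhdsWithin_le_nhds (s := Set.Iio 1))
      rw [one_mul] at hl3
      refine ge_of_tendsto hl3 ?_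
      filter_upwards [Ioo_mem_nhdsLT (show (0:ℝ) < 1 by norm_num)] with c hc
      exact key c hc.1.le hc.2
  have hGc : IsCompact G := hcomp.of_isClosed_subset hGclosed hGsub
  have hGne : G.Nonempty := by
    obtain ⟨x, hx⟩ := hXne
    obtain ⟨y, hy⟩ := hne x
    exact ⟨(x, y), hx, hy⟩
  obtain ⟨p, hp, hmax⟩ := hGc.exists_isMaxOn hGne hf.continuousOn
  exact ⟨p.1, hp.1, p.2, hp.2, fun x hx y hy => hmax (show (x, y) ∈ G from ⟨hx, hy⟩)⟩
end
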